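/- arXiv:2107.14353 — 10 statements merged into one kernel-verified Lean document; each statement's English description precedes it below -/
import Mathlib

section
/- Let n ≥ 1, let K_n = ℂ(x₁,…,x_n) be the field of rational functions in n variables over ℂ, and for 1 ≤ i ≤ n let F_i ⊆ K_n be the subfield generated over ℂ by x_{i+1},…,x_n (so F_n = ℂ). The set 𝓑_n of ℂ-algebra automorphisms σ of K_n such that for every i there exist a_i ∈ F_i \ {0} and b_i ∈ F_i with σ(x_i) = a_i·x_i + b_i is a subgroup of the group of ℂ-algebra automorphisms of K_n; this subgroup is solvable of derived length exactly 2n, i.e. the 2n-th term of its derived series is the trivial subgroup while the (2n−1)-st term is not. -/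
/-!
Write `K = Kn n`, indexed from `0`, so that `F n i = ℂ(x_{i+1}, …, x_{n-1})`.

*Subgroup.* An endomorphism of the shape required by `Bset n` maps each `F n i` into itself; the
same holds for the inverse by descending induction on `i` (`symm_mem`).

*Upper bound.* If two automorphisms fix `F n i` pointwise and act on `x_i` affinely, then their
commutator acts on `x_i` as a translation, and the commutator of two translations fixes `x_i`. So
two steps of the derived series trivialise the action on one more variable, starting from the last
(`derivedSeries_le`).

*Lower bound.* Let `T_j(b)` be the translation `x_j ↦ x_j + b` with `b ∈ F n j`, and `M_j(a)` the
dilation `x_j ↦ a x_j` with `a ∈ F n j \ {0}`; the other variables are fixed. They exist by a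
transcendence degree count (`exists_aff`). By induction on `m` (`lower`), the `m`-th derived
subgroup contains all `T_j(b)` when `m ≤ 2(n-1-j)+1`, and some `M_j(a)` with `a ≠ 1` when
`m ≤ 2(n-1-j)`:
* if `a ≠ 1`, each translation `T_j(b')` is the commutator of `M_j(a)` and some `T_j(b)`;
* for `t ∈ ℂ` and `τ = T_{j+1}(t)`, the commutator of `M_j(a)` and `τ` is `M_j(a / τ(a))`.
To keep the coefficient `a / τ(a)` different from `1` under iteration, `a` is kept in the class of
rational functions of `x = x_{j+1}` with a simple zero at `0` (`SimpleZero`); this class is stable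
under `a ↦ a(x) / a(x + t)` as soon as `t` is neither a zero nor a pole of `a`.
Hence `T_0(1)` is a nontrivial element of the `(2n-1)`-st derived subgroup.
-/


open MvPolynomial

noncomputable section

/-- `Kn n` is the field ℂ(x₁,…,xₙ) of rational functions in `n` variables over ℂ,
realised as the fraction field of the polynomial ring. -/
abbrev Kn (n : ℕ) := FractionRing (MvPolynomial (Fin n) ℂ)

/-- the variable `x_{i+1}` (0-based index `i`) viewed inside `Kn n` -/
def xvar (n : ℕ) (i : Fin n) : Kn n :=
  algebraMap (MvPolynomial (Fin n) ℂ) (Kn n) (X i)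

/-- `F n i` is the subfield of `Kn n` generated over ℂ by the variables `x_j` with `j > i`. -/
def F (n : ℕ) (i : Fin n) : Subfield (Kn n) :=
  Subfield.closure (Set.range (algebraMap ℂ (Kn n)) ∪ (xvar n '' {j : Fin n | i < j}))

/-- the set 𝓑ₙ of ℂ-algebra automorphisms σ of `Kn n` with
`σ(x_i) = a_i·x_i + b_i`, `a_i ∈ F_i \ {0}`, `b_i ∈ F_i` for every `i` -/
def Bset (n : ℕ) : Set (Kn n ≃ₐ[ℂ] Kn n) :=
  { σ | ∀ i : Fin n, ∃ a b : Kn n, a ∈ F n i ∧ b ∈ F n i ∧ a ≠ 0 ∧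
      σ (xvar n i) = a * xvar n i + b }

/-! ### Homomorphisms determined by the variables -/

lemma C_mem_F (n : ℕ) (i : Fin n) (c : ℂ) : algebraMap ℂ (Kn n) c ∈ F n i :=
  Subfield.subset_closure (Or.inl ⟨c, rfl⟩)

lemma xvar_mem_F {n : ℕ} {i j : Fin n} (h : i < j) : xvar n j ∈ F n i :=
  Subfield.subset_closure (Or.inr ⟨j, h, rfl⟩)

lemma F_mono {n : ℕ} {i j : Fin n} (h : i ≤ j) : F n j ≤ F n i :=
  Subfield.closure_mono
    (Set.union_subset_union_right _ (Set.image_mono fun _ hk => lt_of_le_of_lt h hk))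

lemma map_mem_F {n : ℕ} (σ : Kn n →ₐ[ℂ] Kn n) (i : Fin n)
    (h : ∀ j, i < j → σ (xvar n j) ∈ F n i) {y : Kn n} (hy : y ∈ F n i) : σ y ∈ F n i := by
  have : F n i ≤ (F n i).comap σ.toRingHom := by
    refine Subfield.closure_le.2 ?_
    rintro _ (⟨c, rfl⟩ | ⟨j, hj, rfl⟩)
    · change σ (algebraMap ℂ (Kn n) c) ∈ F n i
      rw [AlgHom.commutes]
      exact C_mem_F n i c
    · exact h j hj
  exact this hy

lemma map_eq_self {n : ℕ} (σ : Kn n →ₐ[ℂ] Kn n) (i : Fin n)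
    (h : ∀ j, i < j → σ (xvar n j) = xvar n j) {y : Kn n} (hy : y ∈ F n i) : σ y = y := by
  have : F n i ≤ σ.toRingHom.eqLocusField (RingHom.id _) := by
    refine Subfield.closure_le.2 ?_
    rintro _ (⟨c, rfl⟩ | ⟨j, hj, rfl⟩)
    · exact AlgHom.commutes σ c
    · exact h j hj
  exact this hy

lemma hom_ext {n : ℕ} {σ τ : Kn n →ₐ[ℂ] Kn n} (h : ∀ i, σ (xvar n i) = τ (xvar n i)) :
    σ = τ := by
  have h1 : σ.comp (IsScalarTower.toAlgHom ℂ (MvPolynomial (Fin n) ℂ) (Kn n)) =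
      τ.comp (IsScalarTower.toAlgHom ℂ (MvPolynomial (Fin n) ℂ) (Kn n)) :=
    MvPolynomial.algHom_ext h
  apply AlgHom.coe_ringHom_injective
  apply IsLocalization.ringHom_ext (nonZeroDivisors (MvPolynomial (Fin n) ℂ))
  exact RingHom.ext fun p => DFunLike.congr_fun h1 p

lemma equiv_ext {n : ℕ} {σ τ : Kn n ≃ₐ[ℂ] Kn n} (h : ∀ i, σ (xvar n i) = τ (xvar n i)) :
    σ = τ := by
  have := hom_ext (σ := (σ : Kn n →ₐ[ℂ] Kn n)) (τ := (τ : Kn n →ₐ[ℂ] Kn n)) h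
  ext x
  exact DFunLike.congr_fun this x

/-! ### The subgroup -/

lemma B_map_F {n : ℕ} {σ : Kn n ≃ₐ[ℂ] Kn n} (hσ : σ ∈ Bset n) (i : Fin n) {y : Kn n}
    (hy : y ∈ F n i) : σ y ∈ F n i := by
  refine map_mem_F (σ : Kn n →ₐ[ℂ] Kn n) i (fun j hj => ?_) hy
  obtain ⟨a, b, ha, hb, -, h⟩ := hσ j
  change σ (xvar n j) ∈ _
  rw [h]
  exact add_mem (mul_mem (F_mono hj.le ha) (xvar_mem_F hj)) (F_mono hj.le hb)

lemma one_mem_B (n : ℕ) : (1 : Kn n ≃ₐ[ℂ] Kn n) ∈ Bset n := fun i =>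
  ⟨1, 0, one_mem _, zero_mem _, one_ne_zero, by simp⟩

lemma mul_mem_B {n : ℕ} {σ τ : Kn n ≃ₐ[ℂ] Kn n} (hσ : σ ∈ Bset n) (hτ : τ ∈ Bset n) :
    σ * τ ∈ Bset n := by
  intro i
  obtain ⟨a, b, ha, hb, ha0, h⟩ := hτ i
  obtain ⟨c, d, hc, hd, hc0, h'⟩ := hσ i
  refine ⟨σ a * c, σ a * d + σ b, mul_mem (B_map_F hσ i ha) hc,
    add_mem (mul_mem (B_map_F hσ i ha) hd) (B_map_F hσ i hb), by simp [ha0, hc0], ?_⟩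
  rw [AlgEquiv.mul_apply, h, map_add, map_mul, h']
  ring

/-- Descending induction on `i`: since `σ⁻¹` maps the later variables into `F n i`, it preserves
`F n i`, and then `σ (x_i) = a x_i + b` can be solved for `σ⁻¹ (x_i)` over `F n i`. -/
lemma symm_mem {n : ℕ} {σ : Kn n ≃ₐ[ℂ] Kn n} (hσ : σ ∈ Bset n) : σ⁻¹ ∈ Bset n := by
  intro i
  induction hk : n - (i : ℕ) using Nat.strong_induction_on generalizing i with
  | _ k ih =>
  have hF : ∀ {y : Kn n}, y ∈ F n i → σ⁻¹ y ∈ F n i := fun hy => by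
    refine map_mem_F ((σ⁻¹ : Kn n ≃ₐ[ℂ] Kn n) : Kn n →ₐ[ℂ] Kn n) i (fun j hj => ?_) hy
    obtain ⟨a, b, ha, hb, -, h⟩ := ih (n - (j : ℕ)) (by have := i.2; have := j.2; omega) j rfl
    change σ⁻¹ (xvar n j) ∈ _
    rw [h]
    exact add_mem (mul_mem (F_mono hj.le ha) (xvar_mem_F hj)) (F_mono hj.le hb)
  obtain ⟨a, b, ha, hb, ha0, h⟩ := hσ i
  have ha' : σ⁻¹ a ≠ 0 := by simpa using ha0
  refine ⟨(σ⁻¹ a)⁻¹, -(σ⁻¹ b) * (σ⁻¹ a)⁻¹, inv_mem (hF ha),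
    mul_mem (neg_mem (hF hb)) (inv_mem (hF ha)), inv_ne_zero ha', ?_⟩
  have h2 : xvar n i = σ⁻¹ a * σ⁻¹ (xvar n i) + σ⁻¹ b := by
    rw [← map_mul, ← map_add, ← h]
    exact (σ.symm_apply_apply _).symm
  field_simp
  linear_combination -h2

/-- The subgroup of automorphisms with underlying set `Bset n`. -/
def Bgrp (n : ℕ) : Subgroup (Kn n ≃ₐ[ℂ] Kn n) where
  carrier := Bset n
  mul_mem' := mul_mem_B
  one_mem' := one_mem_B n
  inv_mem' := symm_mem

open scoped commutatorElement

/-! ### Upper bound for the derived length -/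

lemma fix_F {n : ℕ} {σ : Kn n ≃ₐ[ℂ] Kn n} {i : Fin n}
    (h : ∀ j, i < j → σ (xvar n j) = xvar n j) {y : Kn n} (hy : y ∈ F n i) : σ y = y :=
  map_eq_self (σ : Kn n →ₐ[ℂ] Kn n) i h hy

/-- The elements of `Bgrp n` fixing the last `k` variables. -/
def W (n k : ℕ) : Subgroup (Bgrp n) where
  carrier := {σ | ∀ j : Fin n, n ≤ j + k → σ.1 (xvar n j) = xvar n j}
  one_mem' := fun _ _ => rfl
  mul_mem' := fun {σ τ} hσ hτ j hj => by
    change σ.1 (τ.1 _) = _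
    rw [hτ j hj, hσ j hj]
  inv_mem' := fun {σ} hσ j hj => by
    change σ.1.symm _ = _
    rw [AlgEquiv.symm_apply_eq, hσ j hj]

lemma W_fix {n k : ℕ} {σ : Bgrp n} (hσ : σ ∈ W n k) {j : Fin n} (hj : n ≤ j + k + 1) {y : Kn n}
    (hy : y ∈ F n j) : σ.1 y = y :=
  fix_F (fun l hl => hσ l (by have : (j : ℕ) < l := hl; omega)) hy

/-- The elements of `Bgrp n` fixing the last `k` variables and acting on the preceding variable as
a translation. -/
def W' (n k : ℕ) : Subgroup (Bgrp n) where
  carrier := {σ | σ ∈ W n k ∧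
    ∀ j : Fin n, n = j + k + 1 → ∃ b ∈ F n j, σ.1 (xvar n j) = xvar n j + b}
  one_mem' := ⟨one_mem _, fun _ _ => ⟨0, zero_mem _, by simp⟩⟩
  mul_mem' := fun {σ τ} hσ hτ => ⟨mul_mem hσ.1 hτ.1, fun j hj => by
    obtain ⟨b, hb, h⟩ := hσ.2 j hj
    obtain ⟨c, hc, h'⟩ := hτ.2 j hj
    refine ⟨b + c, add_mem hb hc, ?_⟩
    change σ.1 (τ.1 _) = _
    rw [h', map_add, h, W_fix hσ.1 hj.le hc, add_assoc]⟩
  inv_mem' := fun {σ} hσ => ⟨inv_mem hσ.1, fun j hj => by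
    obtain ⟨b, hb, h⟩ := hσ.2 j hj
    refine ⟨-b, neg_mem hb, ?_⟩
    change σ.1.symm _ = _
    rw [AlgEquiv.symm_apply_eq, map_add, h, map_neg, W_fix hσ.1 hj.le hb]
    ring⟩

lemma commutator_apply {n : ℕ} (g h : Bgrp n) (y : Kn n) :
    (⁅g, h⁆ : Bgrp n).1 (h.1 (g.1 y)) = g.1 (h.1 y) := by
  have : ⁅g, h⁆ * (h * g) = g * h := by rw [commutatorElement_def]; group
  exact DFunLike.congr_fun (congrArg Subtype.val this) y

lemma commutator_W {n k : ℕ} : ⁅W n k, W n k⁆ ≤ W' n k := by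
  rw [Subgroup.commutator_le]
  intro g hg h hh
  have hw : ⁅g, h⁆ ∈ W n k :=
    mul_mem (mul_mem (mul_mem hg hh) (inv_mem hg)) (inv_mem hh)
  refine ⟨hw, fun j hj => ?_⟩
  obtain ⟨c, d, hc, hd, hc0, h1⟩ := g.2 j
  obtain ⟨e, f, he, hf, he0, h2⟩ := h.2 j
  have h3 := commutator_apply g h (xvar n j)
  rw [h1, h2] at h3
  simp only [map_add, map_mul, h1, h2, W_fix hg hj.le he, W_fix hg hj.le hf, W_fix hh hj.le hc,
    W_fix hh hj.le hd, W_fix hw hj.le hc, W_fix hw hj.le hd, W_fix hw hj.le he,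
    W_fix hw hj.le hf] at h3
  refine ⟨(e * d + f - (c * f + d)) / (c * e), ?_, ?_⟩
  · exact div_mem (sub_mem (add_mem (mul_mem he hd) hf) (add_mem (mul_mem hc hf) hd))
      (mul_mem hc he)
  · field_simp
    linear_combination h3

lemma commutator_W' {n k : ℕ} : ⁅W' n k, W' n k⁆ ≤ W n (k + 1) := by
  rw [Subgroup.commutator_le]
  intro g hg h hh
  have hw : ⁅g, h⁆ ∈ W n k :=
    mul_mem (mul_mem (mul_mem hg.1 hh.1) (inv_mem hg.1)) (inv_mem hh.1)
  intro j hj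
  by_cases hj' : n ≤ j + k
  · exact hw j hj'
  have hj : n = j + k + 1 := by omega
  obtain ⟨d, hd, h1⟩ := hg.2 j hj
  obtain ⟨f, hf, h2⟩ := hh.2 j hj
  have h3 := commutator_apply g h (xvar n j)
  rw [h1, h2] at h3
  simp only [map_add, h1, h2, W_fix hg.1 hj.le hf, W_fix hh.1 hj.le hd, W_fix hw hj.le hd,
    W_fix hw hj.le hf] at h3
  linear_combination h3

lemma derivedSeries_le (n k : ℕ) : derivedSeries (Bgrp n) (2 * k) ≤ W n k := by
  induction k with
  | zero => exact fun σ _ j hj => absurd j.2 (by omega)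
  | succ k ih =>
    rw [show 2 * (k + 1) = 2 * k + 1 + 1 by ring, derivedSeries_succ, derivedSeries_succ]
    exact (Subgroup.commutator_mono ((Subgroup.commutator_mono ih ih).trans commutator_W)
      ((Subgroup.commutator_mono ih ih).trans commutator_W)).trans commutator_W'

/-! ### Affine automorphisms in one variable -/

lemma algebraicIndependent_xvar (n : ℕ) : AlgebraicIndependent ℂ (xvar n) :=
  (MvPolynomial.algebraicIndependent_X (Fin n) ℂ).map'
    (f := IsScalarTower.toAlgHom ℂ (MvPolynomial (Fin n) ℂ) (Kn n))
    (IsFractionRing.injective (MvPolynomial (Fin n) ℂ) (Kn n))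

lemma closure_xvar (n : ℕ) :
    Subfield.closure (Set.range (algebraMap ℂ (Kn n)) ∪ Set.range (xvar n)) = ⊤ := by
  rw [eq_top_iff]
  intro z _
  obtain ⟨p, q, -, rfl⟩ := IsFractionRing.div_surjective (A := MvPolynomial (Fin n) ℂ) z
  have key : ∀ p : MvPolynomial (Fin n) ℂ, algebraMap _ (Kn n) p ∈
      Subfield.closure (Set.range (algebraMap ℂ (Kn n)) ∪ Set.range (xvar n)) := by
    intro p
    induction p using MvPolynomial.induction_on with
    | C a => exact Subfield.subset_closure (Or.inl ⟨a, rfl⟩)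
    | add p q hp hq => rw [map_add]; exact add_mem hp hq
    | mul_X p i hp =>
      rw [map_mul]
      exact mul_mem hp (Subfield.subset_closure (Or.inr ⟨i, rfl⟩))
  exact div_mem (key p) (key q)

/-- Since `n` is the transcendence degree of `Kn n`, any `n` elements generating `Kn n` are
algebraically independent, hence are the images of the variables under an endomorphism. -/
lemma exists_hom {n : ℕ} (y : Fin n → Kn n)
    (hy : ∀ i, xvar n i ∈ Subfield.closure (Set.range (algebraMap ℂ (Kn n)) ∪ Set.range y)) :
    ∃ φ : Kn n →ₐ[ℂ] Kn n, ∀ i, φ (xvar n i) = y i := by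
  have htop : IntermediateField.adjoin ℂ (Set.range y) = ⊤ := by
    rw [eq_top_iff]
    intro z _
    have h1 : Subfield.closure (Set.range (algebraMap ℂ (Kn n)) ∪ Set.range (xvar n)) ≤
        Subfield.closure (Set.range (algebraMap ℂ (Kn n)) ∪ Set.range y) := by
      refine Subfield.closure_le.2 ?_
      rintro _ (h | ⟨i, rfl⟩)
      · exact Subfield.subset_closure (Or.inl h)
      · exact hy i
    rw [closure_xvar] at h1
    exact h1 (Subfield.mem_top z)
  have halg : Algebra.IsAlgebraic (Algebra.adjoin ℂ (Set.range y)) (Kn n) := by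
    rw [← IntermediateField.isAlgebraic_adjoin_iff_top, htop]
    exact ⟨fun z => isAlgebraic_algebraMap (⟨z, trivial⟩ : (⊤ : IntermediateField ℂ (Kn n)))⟩
  have hcard : Cardinal.mk (Fin n) ≤ Algebra.trdeg ℂ (Kn n) :=
    (algebraicIndependent_xvar n).cardinalMk_le_trdeg
  have hind : Function.Injective (aeval y : MvPolynomial (Fin n) ℂ →ₐ[ℂ] Kn n) :=
    (Algebra.IsAlgebraic.isTranscendenceBasis_of_le_trdeg_of_finite ℂ y hcard).1
  refine ⟨IsFractionRing.liftAlgHom (A := MvPolynomial (Fin n) ℂ) (g := aeval y) hind, fun i => ?_⟩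
  rw [IsFractionRing.liftAlgHom_apply, xvar, IsFractionRing.lift_algebraMap]
  exact aeval_X y i

lemma exists_aff_hom {n : ℕ} (j : Fin n) {a b : Kn n} (ha : a ∈ F n j) (hb : b ∈ F n j)
    (ha0 : a ≠ 0) : ∃ φ : Kn n →ₐ[ℂ] Kn n, (∀ k, k ≠ j → φ (xvar n k) = xvar n k) ∧
      φ (xvar n j) = a * xvar n j + b := by
  obtain ⟨φ, hφ⟩ := exists_hom (Function.update (xvar n) j (a * xvar n j + b)) (by
    set y := Function.update (xvar n) j (a * xvar n j + b) with hy
    set S := Subfield.closure (Set.range (algebraMap ℂ (Kn n)) ∪ Set.range y)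
    have hyS : ∀ i, y i ∈ S := fun i => Subfield.subset_closure (Or.inr ⟨i, rfl⟩)
    have hk : ∀ k, k ≠ j → xvar n k ∈ S := fun k hk => by
      have := hyS k
      rwa [hy, Function.update_of_ne hk] at this
    have hF : F n j ≤ S := by
      refine Subfield.closure_le.2 ?_
      rintro _ (h | ⟨i, hi, rfl⟩)
      · exact Subfield.subset_closure (Or.inl h)
      · exact hk i (ne_of_gt hi)
    intro i
    by_cases hi : i = j
    · subst hi
      have h1 := hyS i
      rw [hy, Function.update_self] at h1
      have h2 := div_mem (sub_mem h1 (hF hb)) (hF ha)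
      rwa [add_sub_cancel_right, mul_div_cancel_left₀ _ ha0] at h2
    · exact hk i hi)
  refine ⟨φ, fun k hk => ?_, ?_⟩
  · rw [hφ, Function.update_of_ne hk]
  · rw [hφ, Function.update_self]

/-- The automorphism `σ` maps `x_j` to `a x_j + b` and fixes the other variables. -/
def IsAff {n : ℕ} (j : Fin n) (a b : Kn n) (σ : Bgrp n) : Prop :=
  (∀ k, k ≠ j → σ.1 (xvar n k) = xvar n k) ∧ σ.1 (xvar n j) = a * xvar n j + b

lemma IsAff.fix {n : ℕ} {j : Fin n} {a b : Kn n} {σ : Bgrp n} (h : IsAff j a b σ) {y : Kn n}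
    (hy : y ∈ F n j) : σ.1 y = y :=
  fix_F (fun k hk => h.1 k (ne_of_gt hk)) hy

lemma exists_aff {n : ℕ} (j : Fin n) {a b : Kn n} (ha : a ∈ F n j) (hb : b ∈ F n j)
    (ha0 : a ≠ 0) : ∃ σ : Bgrp n, IsAff j a b σ := by
  obtain ⟨φ, h1, h2⟩ := exists_aff_hom j ha hb ha0
  obtain ⟨ψ, h3, h4⟩ := exists_aff_hom j (inv_mem ha) (neg_mem (mul_mem (inv_mem ha) hb))
    (inv_ne_zero ha0)
  have hφ : ∀ {y}, y ∈ F n j → φ y = y := fun hy =>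
    map_eq_self φ j (fun k hk => h1 k (ne_of_gt hk)) hy
  have hψ : ∀ {y}, y ∈ F n j → ψ y = y := fun hy =>
    map_eq_self ψ j (fun k hk => h3 k (ne_of_gt hk)) hy
  refine ⟨⟨AlgEquiv.ofAlgHom φ ψ (hom_ext fun k => ?_) (hom_ext fun k => ?_), fun k => ?_⟩,
    h1, h2⟩
  · by_cases hk : k = j
    · subst hk
      simp only [AlgHom.comp_apply, h4, map_add, map_mul, map_neg, map_inv₀, h2, hφ ha, hφ hb,
        AlgHom.id_apply]
      field_simp
      ring
    · simp [h3 k hk, h1 k hk]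
  · by_cases hk : k = j
    · subst hk
      simp only [AlgHom.comp_apply, h4, map_add, map_mul, h2, hψ ha, hψ hb,
        AlgHom.id_apply]
      field_simp
      ring
    · simp [h3 k hk, h1 k hk]
  · by_cases hk : k = j
    · subst hk
      exact ⟨a, b, ha, hb, ha0, h2⟩
    · exact ⟨1, 0, one_mem _, zero_mem _, one_ne_zero, by simpa using h1 k hk⟩

lemma IsAff.unique {n : ℕ} {j : Fin n} {a b : Kn n} {σ τ : Bgrp n} (h : IsAff j a b σ)
    (h' : IsAff j a b τ) : σ = τ := by
  refine Subtype.ext (equiv_ext fun k => ?_)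
  by_cases hk : k = j
  · rw [hk, h.2, h'.2]
  · rw [h.1 k hk, h'.1 k hk]

/-! ### Rational functions with a simple zero -/

/-- `a` is a rational function of `x` with a simple zero at `x = 0`: it has the form
`a = x p(x) / q(x)` with `p(0), q(0) ≠ 0`. -/
def SimpleZero {n : ℕ} (x a : Kn n) : Prop :=
  ∃ p q : Polynomial ℂ, p.eval 0 ≠ 0 ∧ q.eval 0 ≠ 0 ∧
    a * Polynomial.aeval x q = x * Polynomial.aeval x p

lemma SimpleZero.ne_one {n : ℕ} {i : Fin n} {a : Kn n} (h : SimpleZero (xvar n i) a) :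
    a ≠ 1 := by
  rintro rfl
  obtain ⟨p, q, -, hq, h⟩ := h
  have htr : Transcendental ℂ (xvar n i) := (algebraicIndependent_xvar n).transcendental i
  have : q = Polynomial.X * p := by
    apply transcendental_iff_injective.1 htr
    simpa using h
  exact hq (by simp [this])

/-- Any `t` that is neither a zero nor a pole of `a` works; then `a(x + t)` is a unit at `x = 0`. -/
lemma SimpleZero.shift {n : ℕ} {x a : Kn n} (h : SimpleZero x a) (ha0 : a ≠ 0) :
    ∃ t : ℂ, ∀ τ : Kn n ≃ₐ[ℂ] Kn n, τ x = x + algebraMap ℂ (Kn n) t →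
      SimpleZero x (a / τ a) := by
  obtain ⟨p, q, hp, hq, h⟩ := h
  obtain ⟨t, ht⟩ : ∃ t : ℂ, (Polynomial.X * p * q).eval t ≠ 0 := by
    by_contra! hc
    have h0 : Polynomial.X * p * q = 0 := Polynomial.funext (by simpa using hc)
    have hp0 : p ≠ 0 := by rintro rfl; simp at hp
    have hq0 : q ≠ 0 := by rintro rfl; simp at hq
    exact mul_ne_zero (mul_ne_zero Polynomial.X_ne_zero hp0) hq0 h0
  simp only [Polynomial.eval_mul, Polynomial.eval_X, ne_eq, mul_eq_zero, not_or] at ht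
  refine ⟨t, fun τ hτ => ⟨p * q.comp (Polynomial.X + Polynomial.C t),
    (Polynomial.X + Polynomial.C t) * p.comp (Polynomial.X + Polynomial.C t) * q, ?_, ?_, ?_⟩⟩
  · simp [hp, ht.2]
  · simp [hq, ht.1.1, ht.1.2]
  · have hcomp : ∀ r : Polynomial ℂ, Polynomial.aeval x (r.comp (Polynomial.X + Polynomial.C t)) =
        τ (Polynomial.aeval x r) := fun r => by
      rw [Polynomial.aeval_comp, ← Polynomial.aeval_algHom_apply, hτ]
      simp
    have hτa : τ a ≠ 0 := by simpa using ha0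
    have h' := congrArg τ h
    rw [map_mul, map_mul, hτ] at h'
    simp only [map_mul, map_add, hcomp, Polynomial.aeval_X, Polynomial.aeval_C]
    rw [div_mul_eq_mul_div, div_eq_iff hτa]
    linear_combination (-a * Polynomial.aeval x q) * h' + τ a * τ (Polynomial.aeval x q) * h

/-! ### Lower bound for the derived length -/

lemma mem_derived_succ {n m : ℕ} {g h r : Bgrp n} (hg : g ∈ derivedSeries (Bgrp n) m)
    (hh : h ∈ derivedSeries (Bgrp n) m) (e : r * (h * g) = g * h) :
    r ∈ derivedSeries (Bgrp n) (m + 1) := by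
  have : r = ⁅g, h⁆ := by
    rw [eq_mul_inv_of_mul_eq e, commutatorElement_def]
    group
  rw [this, derivedSeries_succ]
  exact Subgroup.commutator_mem_commutator hg hh

/-- If `M_j(a)` with `a ≠ 1` and all `T_j(b)` lie in the `m`-th derived subgroup, then all `T_j(b)`
lie in the next one. -/
lemma translation_mem {n m : ℕ} {j : Fin n} {a b : Kn n} {μ σ : Bgrp n} (ha : a ∈ F n j)
    (_ha0 : a ≠ 0) (ha1 : a ≠ 1) (hμ : IsAff j a 0 μ) (hμm : μ ∈ derivedSeries (Bgrp n) m)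
    (hT : ∀ b ∈ F n j, ∀ σ : Bgrp n, IsAff j 1 b σ → σ ∈ derivedSeries (Bgrp n) m)
    (hb : b ∈ F n j) (hσ : IsAff j 1 b σ) : σ ∈ derivedSeries (Bgrp n) (m + 1) := by
  -- the commutator of `M_j(a)` and `T_j(c)` is `T_j(c (1 - a) / a)`; take `c = a b / (1 - a)`
  have ha2 : 1 - a ≠ 0 := sub_ne_zero.2 ha1.symm
  have hc : a * b / (1 - a) ∈ F n j := div_mem (mul_mem ha hb) (sub_mem (one_mem _) ha)
  obtain ⟨τ, hτ⟩ := exists_aff j (one_mem _) hc one_ne_zero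
  refine mem_derived_succ hμm (hT _ hc τ hτ) (Subtype.ext (equiv_ext fun k => ?_))
  change σ.1 (τ.1 (μ.1 _)) = μ.1 (τ.1 _)
  by_cases hk : k = j
  · subst hk
    simp only [hμ.2, hτ.2, hσ.2, map_add, map_mul, map_zero, map_one, hτ.fix ha, hσ.fix ha,
      hμ.fix hc, hσ.fix hc]
    field_simp
    ring
  · simp only [hμ.1 k hk, hτ.1 k hk, hσ.1 k hk]

/-- The commutator of `M_j(a)` and `τ = T_i(t)`, for `j < i`, is `M_j(a / τ(a))`. -/
lemma dilation_mem {n m : ℕ} {j i : Fin n} (hji : j < i) {a t : Kn n} {μ τ ρ : Bgrp n}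
    (ha : a ∈ F n j) (ha0 : a ≠ 0) (hμ : IsAff j a 0 μ)
    (hμm : μ ∈ derivedSeries (Bgrp n) m) (ht : t ∈ F n i) (hτ : IsAff i 1 t τ)
    (hτm : τ ∈ derivedSeries (Bgrp n) m) (hρ : IsAff j (a / τ.1 a) 0 ρ) :
    ρ ∈ derivedSeries (Bgrp n) (m + 1) := by
  have hτa : τ.1 a ≠ 0 := by simpa using ha0
  have hτa' : τ.1 a ∈ F n j := B_map_F τ.2 j ha
  refine mem_derived_succ hμm hτm (Subtype.ext (equiv_ext fun k => ?_))
  change ρ.1 (τ.1 (μ.1 _)) = μ.1 (τ.1 _)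
  by_cases hk : k = j
  · subst hk
    simp only [hμ.2, hτ.1 k hji.ne, hρ.2, map_add, map_mul, map_zero, hρ.fix hτa']
    field_simp
    ring
  · by_cases hk' : k = i
    · subst hk'
      simp only [hμ.1 k hk, hτ.2, hρ.1 k hk, map_add, map_mul, map_one,
        hρ.fix (F_mono hji.le ht), hμ.fix (F_mono hji.le ht)]
    · simp only [hμ.1 k hk, hτ.1 k hk', hρ.1 k hk]

/-- The conditions read `m ≤ 2(n-1-j)+1` and `m ≤ 2(n-1-j)`; in the second part `i` is the index
following `j`. -/
lemma lower (n m : ℕ) :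
    (∀ j : Fin n, m + 2 * j + 1 ≤ 2 * n → ∀ b ∈ F n j, ∀ σ : Bgrp n, IsAff j 1 b σ →
      σ ∈ derivedSeries (Bgrp n) m) ∧
    (∀ j i : Fin n, (i : ℕ) = j + 1 → m + 2 * j + 2 ≤ 2 * n → ∃ a ∈ F n j, a ≠ 0 ∧
      SimpleZero (xvar n i) a ∧ ∃ μ ∈ derivedSeries (Bgrp n) m, IsAff j a 0 μ) := by
  induction m with
  | zero =>
    refine ⟨fun _ _ _ _ _ _ => Subgroup.mem_top _, fun j i hij _ => ?_⟩
    have hji : j < i := Fin.lt_def.2 (by omega)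
    have hx0 : xvar n i ≠ 0 := (algebraicIndependent_xvar n).ne_zero i
    obtain ⟨μ, hμ⟩ := exists_aff j (xvar_mem_F hji) (zero_mem _) hx0
    exact ⟨xvar n i, xvar_mem_F hji, hx0, ⟨1, 1, by simp, by simp, by simp⟩, μ,
      Subgroup.mem_top _, hμ⟩
  | succ m ih =>
    obtain ⟨ihT, ihM⟩ := ih
    refine ⟨fun j hj b hb σ hσ => ?_, fun j i hij hm => ?_⟩
    · obtain ⟨a, ha, ha0, ha1, μ, hμm, hμ⟩ : ∃ a ∈ F n j, a ≠ 0 ∧ a ≠ 1 ∧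
          ∃ μ ∈ derivedSeries (Bgrp n) m, IsAff j a 0 μ := by
        by_cases hjn : (j : ℕ) + 1 < n
        · obtain ⟨a, ha, ha0, hz, h⟩ := ihM j ⟨j + 1, hjn⟩ rfl (by omega)
          exact ⟨a, ha, ha0, hz.ne_one, h⟩
        · -- the last variable: here `m = 0` and a constant dilation is available
          have hm0 : m = 0 := by have := j.2; omega
          subst hm0
          have h2 : algebraMap ℂ (Kn n) 2 ≠ 0 := by simp
          obtain ⟨μ, hμ⟩ := exists_aff j (C_mem_F n j 2) (zero_mem _) h2
          refine ⟨_, C_mem_F n j 2, h2, ?_, μ, Subgroup.mem_top _, hμ⟩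
          rw [← map_one (algebraMap ℂ (Kn n))]
          exact (algebraMap ℂ (Kn n)).injective.ne (by norm_num)
      exact translation_mem ha ha0 ha1 hμ hμm (ihT j (by omega)) hb hσ
    · obtain ⟨a, ha, ha0, hz, μ, hμm, hμ⟩ := ihM j i hij (by omega)
      have hji : j < i := Fin.lt_def.2 (by omega)
      obtain ⟨t, ht⟩ := hz.shift ha0
      obtain ⟨τ, hτ⟩ := exists_aff i (one_mem _) (C_mem_F n i t) one_ne_zero
      have hτm := ihT i (by omega) _ (C_mem_F n i t) τ hτ
      have hτa : τ.1 a ≠ 0 := by simpa using ha0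
      have hd : a / τ.1 a ∈ F n j := div_mem ha (B_map_F τ.2 j ha)
      obtain ⟨ρ, hρ⟩ := exists_aff j hd (zero_mem _) (div_ne_zero ha0 hτa)
      exact ⟨_, hd, div_ne_zero ha0 hτa, ht τ.1 (by rw [hτ.2, one_mul]), ρ,
        dilation_mem hji ha ha0 hμ hμm (C_mem_F n i t) hτ hτm hρ, hρ⟩

/-- The set 𝓑ₙ is a subgroup of the group of ℂ-algebra automorphisms of ℂ(x₁,…,xₙ),
and this subgroup is solvable of derived length exactly 2n. -/
theorem stmt0 (n : ℕ) (hn : 1 ≤ n) :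
    ∃ B : Subgroup (Kn n ≃ₐ[ℂ] Kn n), (B : Set (Kn n ≃ₐ[ℂ] Kn n)) = Bset n ∧
      derivedSeries B (2 * n) = ⊥ ∧ derivedSeries B (2 * n - 1) ≠ ⊥ := by
  refine ⟨Bgrp n, rfl, ?_, fun h => ?_⟩
  · rw [eq_bot_iff]
    exact fun σ hσ => Subgroup.mem_bot.2 (Subtype.ext (equiv_ext fun i =>
      derivedSeries_le n n hσ i (by omega)))
  · obtain ⟨σ, hσ⟩ := exists_aff (⟨0, hn⟩ : Fin n) (one_mem _) (one_mem _) one_ne_zero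
    have h1 := (lower n (2 * n - 1)).1 ⟨0, hn⟩ (by simp only; omega) 1 (one_mem _) σ hσ
    rw [h, Subgroup.mem_bot] at h1
    have h2 := hσ.2
    rw [h1, one_mul] at h2
    exact one_ne_zero (left_eq_add.1 h2)
end
end

section
/- Let K be a field and let f ∈ K be an element that is not a square in K. Then the group T_f is isomorphic, as an abstract group, to the quotient group Lˣ/Kˣ, where L = K[X]/(X²−f) is the quadratic field extension of K obtained by adjoining a square root of f and Kˣ is embedded in Lˣ via the canonical inclusion K → L. -/
/-! Multiplication by `a + b√f` on `L = K[X]/(X² − f)` has, in the basis `1, √f`, the matrix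
`((a, b·f), (b, a))`. This gives a `K`-algebra homomorphism `L → M₂(K)` (`mulMatrix`), hence a group
homomorphism `Lˣ → GL₂(K) → PGL₂(K)` (`toPGL`). Its range is `T_f` (`coe_range_toPGL`): an invertible
matrix of that shape comes from a unit of `L`, the inverse being the conjugate divided by the
norm `a² − b²f = det`. Its kernel is `Kˣ` (`ker_toPGL`), because such a matrix is scalar exactly
when `b = 0`. The first isomorphism theorem finishes the proof.
-/


open Matrix Polynomial

/-- the general linear group GL₂(K) -/
abbrev GL2 (K : Type*) [Field K] := Matrix.GeneralLinearGroup (Fin 2) K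

/-- the projective general linear group PGL₂(K) = GL₂(K)/centre -/
abbrev PGL2 (K : Type*) [Field K] := GL2 K ⧸ Subgroup.center (GL2 K)

/-- the canonical projection p : GL₂(K) → PGL₂(K) -/
def pgl (K : Type*) [Field K] : GL2 K →* PGL2 K := QuotientGroup.mk' _

/-- the subset T_f of PGL₂(K): classes of the matrices ((a, b·f), (b, a)) with (a,b) ≠ (0,0) -/
def Tset (K : Type*) [Field K] (f : K) : Set (PGL2 K) :=
  { x | ∃ (M : GL2 K) (a b : K), ¬(a = 0 ∧ b = 0) ∧
      (M : Matrix (Fin 2) (Fin 2) K) = !![a, b * f; b, a] ∧ x = pgl K M }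

/-- The matrix representing multiplication by `√f` in the basis `1, √f` squares to `f`. -/
lemma aeval_rootMatrix (K : Type*) [Field K] (f : K) :
    aeval (!![0, f; 1, 0] : Matrix (Fin 2) (Fin 2) K) (X ^ 2 - C f : K[X]) = 0 := by
  ext i j
  fin_cases i <;> fin_cases j <;>
    simp [pow_two, Matrix.algebraMap_matrix_apply]

/-- The regular representation `K[X]/(X² − f) → M₂(K)` in the basis `1, √f`, determined by the
image of the root `√f`. `AdjoinRoot.liftAlgHom` requires a commutative target, so the map is
obtained from the quotient `K[X] ⧸ (X² − f)` underlying `AdjoinRoot`. -/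
noncomputable def mulMatrix (K : Type*) [Field K] (f : K) :
    AdjoinRoot (X ^ 2 - C f : K[X]) →ₐ[K] Matrix (Fin 2) (Fin 2) K :=
  Ideal.Quotient.liftₐ (Ideal.span {(X ^ 2 - C f : K[X])})
    (aeval (!![0, f; 1, 0] : Matrix (Fin 2) (Fin 2) K)) fun q hq => by
      obtain ⟨r, rfl⟩ := Ideal.mem_span_singleton.mp hq
      rw [map_mul, aeval_rootMatrix, zero_mul]

lemma root_mul_root {K : Type*} [Field K] (f : K) :
    AdjoinRoot.root (X ^ 2 - C f : K[X]) * AdjoinRoot.root (X ^ 2 - C f : K[X]) =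
      algebraMap K _ f := by
  have h := AdjoinRoot.eval₂_root (X ^ 2 - C f : K[X])
  simp only [eval₂_sub, eval₂_pow, eval₂_X, eval₂_C] at h
  rw [← pow_two]
  exact sub_eq_zero.mp h

lemma exists_eq_add_mul_root {K : Type*} [Field K] (f : K)
    (x : AdjoinRoot (X ^ 2 - C f : K[X])) :
    ∃ a b : K, x = algebraMap K _ a + algebraMap K _ b * AdjoinRoot.root _ := by
  induction x using AdjoinRoot.induction_on with
  | ih p =>
    have key (n : ℕ) (c : K) (h : ∃ a b : K, AdjoinRoot.mk (X ^ 2 - C f : K[X]) (C c * X ^ n) =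
        algebraMap K _ a + algebraMap K _ b * AdjoinRoot.root _) :
        ∃ a b : K, AdjoinRoot.mk (X ^ 2 - C f : K[X]) (C c * X ^ (n + 1)) =
        algebraMap K _ a + algebraMap K _ b * AdjoinRoot.root _ := by
      obtain ⟨a, b, h⟩ := h
      refine ⟨b * f, a, ?_⟩
      rw [pow_succ X n, ← mul_assoc, map_mul, h, AdjoinRoot.mk_X, map_mul]
      linear_combination algebraMap K _ b * root_mul_root f
    induction p using Polynomial.induction_on with
    | C a => exact ⟨a, 0, by simp [AdjoinRoot.algebraMap_eq]⟩
    | add p q hp hq =>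
      obtain ⟨a, b, hp⟩ := hp
      obtain ⟨c, d, hq⟩ := hq
      exact ⟨a + c, b + d, by simp only [map_add, hp, hq]; ring⟩
    | monomial n c h => exact key n c h

lemma mulMatrix_apply {K : Type*} [Field K] (f a b : K) :
    mulMatrix K f (algebraMap K _ a + algebraMap K _ b * AdjoinRoot.root _) =
      !![a, b * f; b, a] := by
  have hr : mulMatrix K f (AdjoinRoot.root _) = !![0, f; 1, 0] :=
    aeval_X (R := K) _
  rw [map_add, map_mul, AlgHom.commutes, AlgHom.commutes, hr, ← Algebra.smul_def]
  ext i j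
  fin_cases i <;> fin_cases j <;> simp [Matrix.algebraMap_matrix_apply]

/-- The homomorphism `Lˣ → PGL₂(K)` induced by the regular representation. -/
noncomputable def toPGL (K : Type*) [Field K] (f : K) :
    (AdjoinRoot (X ^ 2 - C f : K[X]))ˣ →* PGL2 K :=
  (pgl K).comp (Units.map (mulMatrix K f : _ →* Matrix (Fin 2) (Fin 2) K))

lemma coe_range_toPGL (K : Type*) [Field K] (f : K) :
    ((toPGL K f).range : Set (PGL2 K)) = Tset K f := by
  ext x
  constructor
  · rintro ⟨u, rfl⟩
    obtain ⟨a, b, hu⟩ := exists_eq_add_mul_root f (u : AdjoinRoot (X ^ 2 - C f : K[X]))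
    have hM : ((Units.map (mulMatrix K f : _ →* Matrix (Fin 2) (Fin 2) K) u : GL2 K) :
        Matrix (Fin 2) (Fin 2) K) = !![a, b * f; b, a] := by
      rw [← mulMatrix_apply, ← hu]; rfl
    refine ⟨_, a, b, ?_, hM, rfl⟩
    rintro ⟨rfl, rfl⟩
    refine Units.ne_zero (Units.map (mulMatrix K f : _ →* Matrix (Fin 2) (Fin 2) K) u) ?_
    rw [hM]
    ext i j
    fin_cases i <;> fin_cases j <;> simp
  · rintro ⟨M, a, b, -, hM, rfl⟩
    have hd : a * a - b * f * b ≠ 0 := by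
      have h := ((Matrix.isUnit_iff_isUnit_det _).mp M.isUnit).ne_zero
      rwa [hM, Matrix.det_fin_two_of] at h
    -- the inverse of `a + b√f` is its conjugate `a - b√f` divided by its norm
    have huv : (algebraMap K (AdjoinRoot (X ^ 2 - C f : K[X])) a +
          algebraMap K _ b * AdjoinRoot.root _) *
        (algebraMap K _ (a * a - b * f * b)⁻¹ *
          (algebraMap K _ a - algebraMap K _ b * AdjoinRoot.root _)) = 1 := by
      have h1 : algebraMap K (AdjoinRoot (X ^ 2 - C f : K[X])) (a * a - b * f * b)⁻¹ *
          algebraMap K _ (a * a - b * f * b) = 1 := by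
        rw [← map_mul, inv_mul_cancel₀ hd, map_one]
      rw [← h1]
      simp only [map_sub, map_mul]
      linear_combination (-(algebraMap K (AdjoinRoot (X ^ 2 - C f : K[X]))
        (a * a - b * f * b)⁻¹ * algebraMap K _ b * algebraMap K _ b)) * root_mul_root f
    refine ⟨Units.mkOfMulEqOne _ _ huv, congrArg (pgl K) (Units.ext ?_)⟩
    rw [hM, ← mulMatrix_apply]
    rfl

lemma ker_toPGL (K : Type*) [Field K] (f : K) :
    (toPGL K f).ker =
      (Units.map (algebraMap K (AdjoinRoot (X ^ 2 - C f : K[X]))).toMonoidHom).range := by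
  ext u
  have hmem : u ∈ (toPGL K f).ker ↔
      Units.map (mulMatrix K f : _ →* Matrix (Fin 2) (Fin 2) K) u ∈ Subgroup.center (GL2 K) := by
    rw [MonoidHom.mem_ker]
    exact QuotientGroup.eq_one_iff _
  rw [hmem, Matrix.GeneralLinearGroup.mem_center_iff_val_mem_range_scalar]
  constructor
  · rintro ⟨c, hc⟩
    obtain ⟨a, b, hu⟩ := exists_eq_add_mul_root f (u : AdjoinRoot (X ^ 2 - C f : K[X]))
    have hM : Matrix.scalar (Fin 2) c = !![a, b * f; b, a] := by
      rw [hc, ← mulMatrix_apply, ← hu]; rfl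
    have hb : b = 0 := by simpa using (congrFun (congrFun hM 1) 0).symm
    have ha : a ≠ 0 := by
      rintro rfl
      refine Units.ne_zero (Units.map (mulMatrix K f : _ →* Matrix (Fin 2) (Fin 2) K) u) ?_
      rw [← hc, hM, hb]
      ext i j
      fin_cases i <;> fin_cases j <;> simp
    exact ⟨Units.mk0 a ha, Units.ext (by simp [hu, hb])⟩
  · rintro ⟨c, rfl⟩
    exact ⟨c, ((mulMatrix K f).commutes c).symm⟩

/-- For a nonsquare `f ∈ K`, the set `T_f` is a subgroup of PGL₂(K), abstractly isomorphic to
`Lˣ/Kˣ` where `L = K[X]/(X²−f)`. -/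
theorem stmt2 (K : Type*) [Field K] (f : K) (hf : ¬ IsSquare f) :
    ∃ T : Subgroup (PGL2 K), (T : Set (PGL2 K)) = Tset K f ∧
      Nonempty (T ≃*
        ((AdjoinRoot (X ^ 2 - C f))ˣ ⧸
          (Units.map (algebraMap K (AdjoinRoot (X ^ 2 - C f))).toMonoidHom).range)) := by
  exact ⟨(toPGL K f).range, coe_range_toPGL K f,
    ⟨(QuotientGroup.quotientKerEquivRange (toPGL K f)).symm.trans
      (QuotientGroup.quotientMulEquivOfEq (ker_toPGL K f))⟩⟩
end

section
/- Let K be a field and let P = T² − e·T − f be a monic irreducible quadratic polynomial in K[T], with companion matrix C_P = ((0, f), (1, e)) ∈ GL₂(K) (invertible since f = −P(0) ≠ 0 by irreducibility). Then G_P := { p(a·I + b·C_P) : (a,b) ∈ K² \ {(0,0)} } is a subgroup of PGL₂(K), and G_P is isomorphic as an abstract group to the quotient (K[T]/⟨P⟩)ˣ/Kˣ of the multiplicative group of the quadratic field K[T]/⟨P⟩ by the image of Kˣ. -/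
/-!
Sending the class `θ` of `X` to the companion matrix `C_P` defines, by Cayley–Hamilton, a ring
homomorphism `K[X]/⟨P⟩ → M₂(K)`. Every element of `K[X]/⟨P⟩` has the form `a + b θ`, with image
`a I + b C_P`. On unit groups, composing with the projection gives a homomorphism
`(K[X]/⟨P⟩)ˣ → PGL₂(K)`. Its range is `G_P`, since every nonzero element of the field `K[X]/⟨P⟩`
is a unit. Its kernel is the image of `Kˣ`, since `a I + b C_P` is scalar only if `b = 0`. The
first isomorphism theorem then gives the claim.
-/

open Matrix Polynomial

/-- `GPset K e f` is the subset `{ p(a·I + b·C_P) : (a,b) ≠ (0,0) }` of PGL₂(K), where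
`C_P = ((0,f),(1,e))` is the companion matrix of `P = X² − e·X − f`. -/
def GPset (K : Type*) [Field K] (e f : K) : Set (PGL2 K) :=
  { x | ∃ (M : GL2 K) (a b : K), ¬(a = 0 ∧ b = 0) ∧
      (M : Matrix (Fin 2) (Fin 2) K) =
        a • (1 : Matrix (Fin 2) (Fin 2) K) + b • !![0, f; 1, e] ∧
      x = pgl K M }

/-- The ring homomorphism `K[X]/⟨P⟩ → M₂(K)` sending the class of `X` to the companion matrix
of `P = X² − e·X − f`. It is built with `Ideal.Quotient.lift`, because `AdjoinRoot.lift`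
requires a commutative codomain. -/
noncomputable def companionHom (K : Type*) [Field K] (e f : K) :
    AdjoinRoot (X ^ 2 - C e * X - C f) →+* Matrix (Fin 2) (Fin 2) K :=
  Ideal.Quotient.lift _ (aeval (R := K) !![0, f; 1, e]).toRingHom (by
    intro g hg
    obtain ⟨q, rfl⟩ := Ideal.mem_span_singleton.1 hg
    have h : aeval (R := K) !![0, f; 1, e] (X ^ 2 - C e * X - C f) = 0 := by
      ext i j
      fin_cases i <;> fin_cases j <;>
        simp [pow_two, Algebra.algebraMap_eq_smul_one]
      ring
    change aeval (R := K) !![0, f; 1, e] ((X ^ 2 - C e * X - C f) * q) = 0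
    rw [map_mul, h, zero_mul])

lemma companionHom_mk {K : Type*} [Field K] (e f : K) (q : K[X]) :
    companionHom K e f (AdjoinRoot.mk _ q) = aeval (R := K) !![0, f; 1, e] q := rfl

lemma companionHom_linear {K : Type*} [Field K] (e f a b : K) :
    companionHom K e f (AdjoinRoot.mk _ (C b * X + C a)) =
      a • (1 : Matrix (Fin 2) (Fin 2) K) + b • !![0, f; 1, e] := by
  rw [companionHom_mk]
  simp [Algebra.algebraMap_eq_smul_one, add_comm]

lemma exists_eq_mk_linear {K : Type*} [Field K] (e f : K)
    (z : AdjoinRoot (X ^ 2 - C e * X - C f)) :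
    ∃ a b : K, z = AdjoinRoot.mk _ (C b * X + C a) := by
  have hm : (X ^ 2 - C e * X - C f).Monic := by monicity!
  have hd : (X ^ 2 - C e * X - C f).degree = 2 := by compute_degree!
  have hlt : (AdjoinRoot.modByMonicHom hm z).degree < 2 := by
    obtain ⟨q, rfl⟩ := AdjoinRoot.mk_surjective z
    rw [AdjoinRoot.modByMonicHom_mk, ← hd]
    exact degree_modByMonic_lt q hm
  obtain ⟨b, a, h⟩ := exists_eq_X_add_C_of_natDegree_le_one
    (p := AdjoinRoot.modByMonicHom hm z) (natDegree_le_of_degree_le (Order.le_of_lt_succ hlt))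
  exact ⟨_, _, by rw [← h]; exact (AdjoinRoot.mk_leftInverse hm z).symm⟩

/-- The homomorphism `(K[X]/⟨P⟩)ˣ → PGL₂(K)` sending `a + b θ` to `p(a·I + b·C_P)`. -/
noncomputable def unitsToPGL (K : Type*) [Field K] (e f : K) :
    (AdjoinRoot (X ^ 2 - C e * X - C f))ˣ →* PGL2 K :=
  (pgl K).comp (Units.map (companionHom K e f).toMonoidHom)

lemma range_unitsToPGL {K : Type*} [Field K] {e f : K}
    (hP : Irreducible (X ^ 2 - C e * X - C f)) :
    ((unitsToPGL K e f).range : Set (PGL2 K)) = GPset K e f := by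
  have : Fact (Irreducible (X ^ 2 - C e * X - C f)) := ⟨hP⟩
  ext x
  constructor
  · rintro ⟨u, rfl⟩
    obtain ⟨a, b, h⟩ := exists_eq_mk_linear e f u
    refine ⟨Units.map (companionHom K e f).toMonoidHom u, a, b, ?_, ?_, rfl⟩
    · rintro ⟨rfl, rfl⟩
      exact u.ne_zero (by simp [h])
    · rw [← companionHom_linear, ← h]
      rfl
  · rintro ⟨M, a, b, -, hM, rfl⟩
    rw [← companionHom_linear] at hM
    have hz : AdjoinRoot.mk (X ^ 2 - C e * X - C f) (C b * X + C a) ≠ 0 := by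
      intro h0
      rw [h0, map_zero] at hM
      exact M.ne_zero hM
    refine ⟨Units.mk0 _ hz, congrArg (pgl K) (Units.ext hM.symm)⟩

lemma ker_unitsToPGL (K : Type*) [Field K] (e f : K) :
    (unitsToPGL K e f).ker =
      (Units.map (algebraMap K (AdjoinRoot (X ^ 2 - C e * X - C f))).toMonoidHom).range := by
  ext u
  have hker : u ∈ (unitsToPGL K e f).ker ↔
      companionHom K e f u ∈ Set.range (Matrix.scalar (Fin 2)) :=
    (QuotientGroup.eq_one_iff _).trans
      Matrix.GeneralLinearGroup.mem_center_iff_val_mem_range_scalar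
  rw [hker]
  constructor
  · rintro ⟨c, hc⟩
    obtain ⟨a, b, h⟩ := exists_eq_mk_linear e f (u : AdjoinRoot (X ^ 2 - C e * X - C f))
    rw [h, companionHom_linear] at hc
    have hb : b = 0 := by simpa using (congrFun (congrFun hc 1) 0).symm
    subst hb
    have hu : (u : AdjoinRoot (X ^ 2 - C e * X - C f)) = algebraMap K _ a := by
      rw [h]; simp [AdjoinRoot.algebraMap_eq]
    -- The quotient ring is nontrivial: otherwise its one element `0` would map to both `0` and `1`.
    have : Nontrivial (AdjoinRoot (X ^ 2 - C e * X - C f)) :=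
      (companionHom K e f).domain_nontrivial
    have ha : a ≠ 0 := by
      rintro rfl
      exact u.ne_zero (by rw [hu, map_zero])
    exact ⟨Units.mk0 a ha, Units.ext hu.symm⟩
  · rintro ⟨c, rfl⟩
    refine ⟨c, ?_⟩
    change _ = companionHom K e f (AdjoinRoot.mk _ (C (c : K)))
    rw [companionHom_mk, aeval_C]
    rfl

/-- If `P = X² − e·X − f` is a (monic) irreducible quadratic polynomial over K, then
`G_P = { p(a·I + b·C_P) : (a,b) ≠ (0,0) }` is a subgroup of PGL₂(K), abstractly
isomorphic to `(K[T]/⟨P⟩)ˣ/Kˣ`. -/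
theorem stmt3 (K : Type*) [Field K] (e f : K)
    (hP : Irreducible (X ^ 2 - C e * X - C f)) :
    ∃ G : Subgroup (PGL2 K), (G : Set (PGL2 K)) = GPset K e f ∧
      Nonempty (G ≃*
        ((AdjoinRoot (X ^ 2 - C e * X - C f))ˣ ⧸
          (Units.map (algebraMap K (AdjoinRoot (X ^ 2 - C e * X - C f))).toMonoidHom).range)) := by
  exact ⟨(unitsToPGL K e f).range, range_unitsToPGL hP,
    ⟨((QuotientGroup.quotientMulEquivOfEq (ker_unitsToPGL K e f).symm).trans
      (QuotientGroup.quotientKerEquivRange (unitsToPGL K e f))).symm⟩⟩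
end

section
/- Let K be a field and let P, Q be monic irreducible quadratic polynomials in K[T], with companion matrices C_P, C_Q ∈ GL₂(K), and let G_P, G_Q ⊆ PGL₂(K) be the associated subgroups G_P = { p(a·I + b·C_P) : (a,b) ≠ (0,0) } and likewise for G_Q. Then G_P and G_Q are conjugate subgroups of PGL₂(K) if and only if the K-algebras K[T]/⟨P⟩ and K[T]/⟨Q⟩ are isomorphic. -/
/-!
Both sides of the equivalence are governed by the same elementary condition: there are `s t : K`,
`t ≠ 0`, such that `s + t·y` is a root of `P = X² − eX − f` whenever `y² = e'y + f'`, i.e.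
`s² + t²f' = es + f` and `2s + te' = e` (`SubstRel`).

* Each element of `K[T]/⟨Q⟩` is uniquely `a + b·root Q`, so an isomorphism sends `root P` to some
  `s + t·root Q` with `t ≠ 0`; conversely such an element defines a `K`-algebra map out of
  `K[T]/⟨P⟩` that is injective (both are fields) and visibly surjective (`nonempty_algEquiv_iff`).
* If `G_P` and `G_Q` are conjugate by `p(g)`, then `g C_P g⁻¹` is a scalar multiple of
  some `a + b·C_Q`, hence of the form `s + t·C_Q`, and it satisfies `P`. Conversely, if
  `A = s + t·C_Q` satisfies `P` then the matrix `g` with columns `v, A v`, where `v = (1, 0)`,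
  intertwines: `A g = g C_P`. Then `g (a + b·C_P) g⁻¹ = (a + bs) + bt·C_Q`, which identifies the two
  subgroups (`exists_conj_iff`).
-/

open Matrix Polynomial

/-! ### The substitution relation and the quadratic polynomials -/

/-- With `y` a root of `X² − e'X − f'`, the element `s + t·y` is a root of `X² − eX − f` and
`t ≠ 0`; expressed in coordinates, the second equation being already divided by `t`. -/
def SubstRel {K : Type*} [Field K] (e f e' f' s t : K) : Prop :=
  t ≠ 0 ∧ s ^ 2 + t ^ 2 * f' = e * s + f ∧ 2 * s + t * e' = e

theorem monic_quad {K : Type*} [Field K] (e f : K) : (X ^ 2 - C e * X - C f).Monic := by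
  monicity!

theorem natDegree_quad {K : Type*} [Field K] (e f : K) :
    (X ^ 2 - C e * X - C f).natDegree = 2 := by
  compute_degree!

/-! ### The quotient algebras -/

theorem root_quad {K : Type*} [Field K] (e f : K) :
    AdjoinRoot.root (X ^ 2 - C e * X - C f) ^ 2 =
      algebraMap K _ e * AdjoinRoot.root (X ^ 2 - C e * X - C f) + algebraMap K _ f := by
  have h := AdjoinRoot.eval₂_root (X ^ 2 - C e * X - C f)
  simp only [eval₂_sub, eval₂_mul, eval₂_pow, eval₂_X, eval₂_C] at h
  rw [AdjoinRoot.algebraMap_eq]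
  linear_combination h

theorem exists_coords {K : Type*} [Field K] (e f : K)
    (z : AdjoinRoot (X ^ 2 - C e * X - C f)) :
    ∃ a b : K, z = algebraMap K _ a + algebraMap K _ b * AdjoinRoot.root _ := by
  obtain ⟨p, rfl⟩ := AdjoinRoot.mk_surjective z
  have hdeg : (p %ₘ (X ^ 2 - C e * X - C f)).natDegree ≤ 1 := by
    have := natDegree_modByMonic_lt p (monic_quad e f)
      (fun h => by have := natDegree_quad e f; rw [h] at this; simp at this)
    rw [natDegree_quad] at this
    omega
  obtain ⟨b, a, hab⟩ := exists_eq_X_add_C_of_natDegree_le_one hdeg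
  refine ⟨a, b, ?_⟩
  have hp : AdjoinRoot.mk (X ^ 2 - C e * X - C f) p =
      AdjoinRoot.mk _ (p %ₘ (X ^ 2 - C e * X - C f)) := by
    rw [AdjoinRoot.mk_eq_mk]
    exact ⟨p /ₘ (X ^ 2 - C e * X - C f), by
      linear_combination -(modByMonic_add_div p (X ^ 2 - C e * X - C f))⟩
  rw [hp, hab, map_add, map_mul, AdjoinRoot.mk_C, AdjoinRoot.mk_C, AdjoinRoot.mk_X,
    AdjoinRoot.algebraMap_eq, add_comm]

theorem coords_eq_zero {K : Type*} [Field K] {e f a b : K}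
    (h : algebraMap K _ a + algebraMap K _ b * AdjoinRoot.root (X ^ 2 - C e * X - C f) = 0) :
    a = 0 ∧ b = 0 := by
  have h1 : AdjoinRoot.mk (X ^ 2 - C e * X - C f) (C b * X + C a) = 0 := by
    rw [map_add, map_mul, AdjoinRoot.mk_C, AdjoinRoot.mk_C, AdjoinRoot.mk_X, add_comm]
    exact h
  rw [AdjoinRoot.mk_eq_zero] at h1
  have h2 : C b * X + C a = 0 := by
    by_contra h0
    have := natDegree_le_of_dvd h1 h0
    rw [natDegree_quad] at this
    have := natDegree_linear_le (a := b) (b := a)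
    omega
  exact ⟨by simpa using congrArg (coeff · 0) h2, by simpa using congrArg (coeff · 1) h2⟩

theorem nonempty_algEquiv_iff {K : Type*} [Field K] {e f e' f' : K}
    (hP : Irreducible (X ^ 2 - C e * X - C f)) (hQ : Irreducible (X ^ 2 - C e' * X - C f')) :
    Nonempty (AdjoinRoot (X ^ 2 - C e * X - C f) ≃ₐ[K] AdjoinRoot (X ^ 2 - C e' * X - C f')) ↔
      ∃ s t : K, SubstRel e f e' f' s t := by
  have := Fact.mk hP
  have := Fact.mk hQ
  have hy := root_quad e' f'
  constructor
  · rintro ⟨φ⟩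
    obtain ⟨s, t, hst⟩ := exists_coords e' f' (φ (AdjoinRoot.root _))
    have ht : t ≠ 0 := by
      -- otherwise `root P` would lie in `K`
      rintro rfl
      have h : AdjoinRoot.root (X ^ 2 - C e * X - C f) = algebraMap K _ s := by
        apply φ.injective
        rw [hst, AlgEquiv.commutes]
        simp
      have := coords_eq_zero (e := e) (f := f) (a := -s) (b := 1) (by
        rw [map_neg, map_one, one_mul, h, neg_add_cancel])
      exact one_ne_zero this.2
    have hx := congrArg φ (root_quad e f)
    simp only [map_pow, map_add, map_mul, AlgEquiv.commutes, hst] at hx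
    have := coords_eq_zero (e := e') (f := f') (a := s ^ 2 + t ^ 2 * f' - (e * s + f))
      (b := t * (2 * s + t * e' - e)) (by
        simp only [map_add, map_sub, map_mul, map_pow, map_ofNat]
        linear_combination hx - (algebraMap K _ t) ^ 2 * hy)
    refine ⟨s, t, ht, sub_eq_zero.mp this.1, ?_⟩
    exact sub_eq_zero.mp ((mul_eq_zero.mp this.2).resolve_left ht)
  · rintro ⟨s, t, ht, h1, h2⟩
    have h1' := congrArg (algebraMap K (AdjoinRoot (X ^ 2 - C e' * X - C f'))) h1
    have h2' := congrArg (algebraMap K (AdjoinRoot (X ^ 2 - C e' * X - C f'))) h2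
    simp only [map_add, map_mul, map_pow, map_ofNat] at h1' h2'
    let ψ := AdjoinRoot.liftAlgHom (X ^ 2 - C e * X - C f)
      (Algebra.ofId K (AdjoinRoot (X ^ 2 - C e' * X - C f')))
      (algebraMap K _ s + algebraMap K _ t * AdjoinRoot.root _) (by
        simp only [eval₂_sub, eval₂_mul, eval₂_pow, eval₂_X, eval₂_C]
        change _ - algebraMap K _ e * _ - algebraMap K _ f = 0
        linear_combination h1' + (algebraMap K _ t) ^ 2 * hy +
          algebraMap K _ t * AdjoinRoot.root _ * h2')
    have hψ : ψ (AdjoinRoot.root _) = algebraMap K _ s + algebraMap K _ t * AdjoinRoot.root _ :=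
      AdjoinRoot.liftAlgHom_root ..
    refine ⟨AlgEquiv.ofBijective ψ ⟨ψ.toRingHom.injective, fun z => ?_⟩⟩
    obtain ⟨a, b, rfl⟩ := exists_coords _ _ z
    -- solve `α + β (s + t y) = a + b y` for `α`, `β`
    refine ⟨algebraMap K _ (a - b / t * s) + algebraMap K _ (b / t) * AdjoinRoot.root _, ?_⟩
    have hb : b = b / t * t := by field_simp
    have hbt := congrArg (algebraMap K (AdjoinRoot (X ^ 2 - C e' * X - C f'))) hb
    rw [map_mul] at hbt
    rw [map_add, map_mul, AlgHom.commutes, AlgHom.commutes, hψ, map_sub, map_mul]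
    linear_combination -(AdjoinRoot.root _) * hbt

/-! ### The subgroups of `PGL₂(K)` -/

theorem ne_zero_of_irreducible {K : Type*} [Field K] {e f : K}
    (hP : Irreducible (X ^ 2 - C e * X - C f)) : f ≠ 0 := by
  intro hf
  have := Fact.mk hP
  have h := root_quad e f
  have hf' : algebraMap K (AdjoinRoot (X ^ 2 - C e * X - C f)) f = 0 := by
    rw [(algebraMap K _).congr_arg hf, map_zero]
  rcases mul_eq_zero.mp (show (AdjoinRoot.root _ - algebraMap K _ e) *
    AdjoinRoot.root (X ^ 2 - C e * X - C f) = 0 by linear_combination h + hf') with h | h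
  · have := coords_eq_zero (e := e) (f := f) (a := -e) (b := 1) (by
      rw [map_neg, map_one]; linear_combination h)
    exact one_ne_zero this.2
  · have := coords_eq_zero (e := e) (f := f) (a := 0) (b := 1) (by
      rw [map_zero, map_one]; linear_combination h)
    exact one_ne_zero this.2

/-- Equality in `PGL₂(K)` is equality up to a nonzero scalar. -/
theorem pgl_eq {K : Type*} [Field K] {M N : GL2 K} (h : pgl K M = pgl K N) :
    ∃ c : K, c ≠ 0 ∧ (N : Matrix (Fin 2) (Fin 2) K) = c • (M : Matrix (Fin 2) (Fin 2) K) := by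
  have h' : M⁻¹ * N ∈ Subgroup.center (GL2 K) := QuotientGroup.eq.mp h
  rw [Matrix.GeneralLinearGroup.center_eq_range_scalar] at h'
  obtain ⟨c, hc⟩ := h'
  refine ⟨c, c.ne_zero, ?_⟩
  have hN : N = M * Matrix.GeneralLinearGroup.scalar (Fin 2) c := by rw [hc]; group
  have := congrArg Units.val hN
  rw [this, Units.val_mul]
  simp [Matrix.GeneralLinearGroup.scalar, Matrix.scalar_apply, ← Matrix.smul_one_eq_diagonal]

/-- The matrix with columns `v, A v`, for `v = (1, 0)` and `A = s + t·C_Q`, conjugates `C_P`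
to `A`. -/
theorem intertwine {K : Type*} [Field K] {e f e' f' s t : K} (h : SubstRel e f e' f' s t)
    (a b : K) :
    !![1, s; 0, t] * (a • (1 : Matrix (Fin 2) (Fin 2) K) + b • !![0, f; 1, e]) =
      ((a + b * s) • (1 : Matrix (Fin 2) (Fin 2) K) + (b * t) • !![0, f'; 1, e']) *
        !![1, s; 0, t] := by
  obtain ⟨-, h1, h2⟩ := h
  ext i j
  fin_cases i <;> fin_cases j <;>
    simp [Matrix.mul_apply, Fin.sum_univ_two, Matrix.one_apply]
  · ring
  · linear_combination -b * h1
  · ring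
  · linear_combination -b * t * h2

theorem exists_conj_iff {K : Type*} [Field K] {e f e' f' : K} (hf : f ≠ 0) :
    (∃ g : PGL2 K, (fun x => g * x * g⁻¹) '' GPset K e f = GPset K e' f') ↔
      ∃ s t : K, SubstRel e f e' f' s t := by
  constructor
  · rintro ⟨g, hg⟩
    obtain ⟨G, rfl⟩ := QuotientGroup.mk'_surjective _ g
    -- `C_P` as an element of `GL₂(K)`
    let N : GL2 K := Matrix.GeneralLinearGroup.mkOfDetNeZero !![0, f; 1, e] (by simpa using hf)
    have hN : (N : Matrix (Fin 2) (Fin 2) K) = !![0, f; 1, e] := rfl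
    have hmem : pgl K (G * N * G⁻¹) ∈ GPset K e' f' := by
      rw [← hg]
      refine ⟨pgl K N, ⟨N, 0, 1, by simp, by simp [hN], rfl⟩, ?_⟩
      simp only [map_mul, map_inv]
      rfl
    obtain ⟨M, a, b, -, hM, hMG⟩ := hmem
    obtain ⟨c, hc, hcM⟩ := pgl_eq hMG.symm
    have hint : (c • (M : Matrix (Fin 2) (Fin 2) K)) * G = G * !![0, f; 1, e] := by
      rw [← hcM, ← hN, ← Units.val_mul, ← Units.val_mul]
      congr 1
      group
    have hcancel : ∀ A B : Matrix (Fin 2) (Fin 2) K, A * G = B * G → A = B :=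
      fun A B h => (Units.mul_left_inj G).mp h
    set A := c • (M : Matrix (Fin 2) (Fin 2) K) with hA
    have hPN : !![0, f; 1, e] * !![0, f; 1, e] =
        e • !![0, f; 1, e] + f • (1 : Matrix (Fin 2) (Fin 2) K) := by
      ext i j
      fin_cases i <;> fin_cases j <;>
        simp [Matrix.mul_apply, Fin.sum_univ_two]
      all_goals ring
    -- `A` is a root of `P`, being conjugate to `C_P`
    have hAA : A * A = e • A + f • (1 : Matrix (Fin 2) (Fin 2) K) := by
      apply hcancel
      rw [mul_assoc, hint, ← mul_assoc, hint, mul_assoc, hPN, add_mul, mul_add, smul_mul_assoc,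
        hint, mul_smul_comm, mul_smul_comm, smul_mul_assoc, mul_one, one_mul]
    have hb : b ≠ 0 := by
      -- otherwise `C_P` would be conjugate to a scalar matrix, hence scalar
      rintro rfl
      have h1 : (G : Matrix (Fin 2) (Fin 2) K) * !![0, f; 1, e] =
          G * ((c * a) • (1 : Matrix (Fin 2) (Fin 2) K)) := by
        rw [← hint, hA, hM]
        simp [mul_smul]
      have h2 := (Units.mul_right_inj G).mp h1
      simpa using congrFun (congrFun h2 1) 0
    refine ⟨c * a, c * b, mul_ne_zero hc hb, ?_, ?_⟩
    · have h := congrFun (congrFun hAA 0) 0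
      simp [hA, hM, Matrix.mul_apply, Fin.sum_univ_two, Matrix.one_apply] at h
      linear_combination h
    · have h := congrFun (congrFun hAA 1) 0
      simp [hA, hM, Matrix.mul_apply, Fin.sum_univ_two, Matrix.one_apply] at h
      apply mul_left_cancel₀ (mul_ne_zero hc hb)
      linear_combination h
  · rintro ⟨s, t, h⟩
    have hst := intertwine h
    have ht := h.1
    let G : GL2 K := Matrix.GeneralLinearGroup.mkOfDetNeZero !![1, s; 0, t] (by simpa using ht)
    have hG : (G : Matrix (Fin 2) (Fin 2) K) = !![1, s; 0, t] := rfl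
    refine ⟨pgl K G, Set.Subset.antisymm ?_ ?_⟩
    · rintro _ ⟨_, ⟨M, a, b, hab, hM, rfl⟩, rfl⟩
      refine ⟨G * M * G⁻¹, a + b * s, b * t, ?_, ?_, by simp only [map_mul, map_inv]⟩
      · rintro ⟨h1, h2⟩
        have hb : b = 0 := (mul_eq_zero.mp h2).resolve_right ht
        subst hb
        exact hab ⟨by simpa using h1, rfl⟩
      · rw [Units.val_mul, Units.val_mul, hM, hG, hst, ← hG, mul_assoc, Units.mul_inv, mul_one]
    · rintro _ ⟨M, a, b, hab, hM, rfl⟩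
      refine ⟨pgl K (G⁻¹ * M * G),
        ⟨G⁻¹ * M * G, a - b / t * s, b / t, ?_, ?_, rfl⟩, ?_⟩
      · rintro ⟨h1, h2⟩
        have hb : b = 0 := (div_eq_zero_iff.mp h2).resolve_right ht
        subst hb
        exact hab ⟨by simpa using h1, rfl⟩
      · have h3 := hst (a - b / t * s) (b / t)
        rw [sub_add_cancel, div_mul_cancel₀ _ ht, ← hM, ← hG] at h3
        rw [Units.val_mul, Units.val_mul, mul_assoc, ← h3, ← mul_assoc, Units.inv_mul, one_mul]
      · simp only [← map_mul, ← map_inv]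
        congr 1
        group

/-- Let `P = X² − e·X − f` and `Q = X² − e'·X − f'` be (monic) irreducible quadratic
polynomials over K. Then `G_P` and `G_Q` are conjugate subgroups of PGL₂(K) if and only
if the K-algebras `K[T]/⟨P⟩` and `K[T]/⟨Q⟩` are isomorphic. -/
theorem stmt4 (K : Type*) [Field K] (e f e' f' : K)
    (hP : Irreducible (X ^ 2 - C e * X - C f))
    (hQ : Irreducible (X ^ 2 - C e' * X - C f')) :
    (∃ g : PGL2 K, (fun x => g * x * g⁻¹) '' GPset K e f = GPset K e' f') ↔
      Nonempty (AdjoinRoot (X ^ 2 - C e * X - C f) ≃ₐ[K]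
        AdjoinRoot (X ^ 2 - C e' * X - C f')) := by
  rw [exists_conj_iff (ne_zero_of_irreducible hP), nonempty_algEquiv_iff hP hQ]
end

section
/- Let K be a field, let f ∈ K be a nonsquare element, let A be a non-identity element of the subgroup T_f of PGL₂(K), and let Ã ∈ GL₂(K) be any matrix with p(Ã) = A. Then the characteristic polynomial of Ã is irreducible over K, and T_f = { p(a·I + b·Ã) : (a,b) ∈ K² \ {(0,0)} }. -/
/-!
A lift of an element of `T_f` is a scalar times a matrix `!![a, b * f; b, a]`, so it again has the
form `!![u, v * f; v, u]` (`exists_lift_form`), and `v ≠ 0` because the element is not the identity.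
The characteristic polynomial is `(X - u) ^ 2 - v ^ 2 * f`; a root `t` would exhibit `f` as the
square of `(t - u) / v`, so this quadratic has no root and is irreducible. Since `v ≠ 0`, the
matrices `!![a, b * f; b, a]` are precisely the linear combinations of `1` and the lift, which
identifies the two families of matrices before passing to classes.
-/

open Matrix Polynomial

/-- `T_f` is the image of a set of matrices stable under nonzero scalars, so that every lift of an
element of `T_f` lies in that set; the entry `v` vanishes only for lifts of the identity. -/
theorem exists_lift_form {K : Type*} [Field K] {f : K} {g : GL2 K}
    (hg : pgl K g ∈ Tset K f) (hg1 : pgl K g ≠ 1) :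
    ∃ u v : K, v ≠ 0 ∧ (g : Matrix (Fin 2) (Fin 2) K) = !![u, v * f; v, u] := by
  obtain ⟨M, a, b, -, hM, hgM⟩ := hg
  obtain ⟨z, hz, rfl⟩ := (QuotientGroup.mk'_eq_mk' _).1 hgM.symm
  obtain ⟨c, hc⟩ := GeneralLinearGroup.mem_center_iff_val_mem_range_scalar.1 hz
  have h : ((M * z : GL2 K) : Matrix (Fin 2) (Fin 2) K) = !![c * a, c * b * f; c * b, c * a] := by
    rw [Units.val_mul, hM, ← hc]
    ext i j
    fin_cases i <;> fin_cases j <;> simp <;> ring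
  refine ⟨c * a, c * b, fun hv => hg1 ?_, h⟩
  refine (QuotientGroup.eq_one_iff _).2
    (GeneralLinearGroup.mem_center_iff_val_mem_range_scalar.2 ⟨c * a, ?_⟩)
  rw [h, hv]
  ext i j
  fin_cases i <;> fin_cases j <;> simp

theorem irreducible_charpoly_of_not_isSquare {K : Type*} [Field K] {f u v : K}
    (hf : ¬ IsSquare f) (hv : v ≠ 0) :
    Irreducible (!![u, v * f; v, u] : Matrix (Fin 2) (Fin 2) K).charpoly := by
  have hdeg : (!![u, v * f; v, u] : Matrix (Fin 2) (Fin 2) K).charpoly.natDegree = 2 := by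
    simp [Matrix.charpoly_natDegree_eq_dim]
  rw [(Matrix.charpoly_monic _).irreducible_iff_roots_eq_zero_of_degree_le_three
    (by omega) (by omega), Multiset.eq_zero_iff_forall_notMem]
  intro t ht
  have h := (Polynomial.mem_roots'.1 ht).2
  simp only [Polynomial.IsRoot.def, Matrix.charpoly_fin_two, Matrix.trace_fin_two_of,
    Matrix.det_fin_two_of, eval_add, eval_sub, eval_mul, eval_pow, eval_X, eval_C] at h
  refine hf ⟨(t - u) / v, ?_⟩
  field_simp
  linear_combination -h

/-- If `f ∈ K` is a nonsquare, `A` is a non-identity element of `T_f` and `Ã ∈ GL₂(K)` is any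
lift of `A`, then the characteristic polynomial of `Ã` is irreducible over K and
`T_f = { p(a·I + b·Ã) : (a,b) ≠ (0,0) }`. -/
theorem stmt5 (K : Type*) [Field K] (f : K) (hf : ¬ IsSquare f)
    (A : PGL2 K) (hA : A ∈ Tset K f) (hA1 : A ≠ 1)
    (Atil : GL2 K) (hAtil : pgl K Atil = A) :
    Irreducible (Matrix.charpoly (Atil : Matrix (Fin 2) (Fin 2) K)) ∧
    Tset K f = { x | ∃ (M : GL2 K) (a b : K), ¬(a = 0 ∧ b = 0) ∧
      (M : Matrix (Fin 2) (Fin 2) K) =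
        a • (1 : Matrix (Fin 2) (Fin 2) K) + b • (Atil : Matrix (Fin 2) (Fin 2) K) ∧
      x = pgl K M } := by
  subst hAtil
  obtain ⟨u, v, hv, hA⟩ := exists_lift_form hA hA1
  rw [hA]
  refine ⟨irreducible_charpoly_of_not_isSquare hf hv, ?_⟩
  ext x
  constructor
  · rintro ⟨M, a, b, hab, hM, rfl⟩
    -- The lower left entry forces the coefficient `b / v` of the lift.
    refine ⟨M, a - b / v * u, b / v, fun ⟨h1, h2⟩ => hab ?_, ?_, rfl⟩
    · rw [h2, zero_mul, sub_zero] at h1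
      exact ⟨h1, (div_eq_zero_iff.1 h2).resolve_right hv⟩
    · rw [hM]
      ext i j
      fin_cases i <;> fin_cases j <;> simp <;> field_simp
  · rintro ⟨M, a, b, hab, hM, rfl⟩
    refine ⟨M, a + b * u, b * v, fun ⟨h1, h2⟩ => hab ?_, ?_, rfl⟩
    · have hb : b = 0 := (mul_eq_zero.1 h2).resolve_right hv
      rw [hb, zero_mul, add_zero] at h1
      exact ⟨h1, hb⟩
    · rw [hM]
      ext i j
      fin_cases i <;> fin_cases j <;> simp <;> ring
end

section
/- Let K be a field, let f, g ∈ K be nonsquare elements, let φ ∈ PGL₂(K), and let A be a non-identity element of T_f. Then φ·T_f·φ⁻¹ = T_g if and only if φ·A·φ⁻¹ ∈ T_g. -/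
/-!
The set `T_f` is the image in `PGL₂(K)` of the invertible elements of the commutative algebra
`K[J]`, where `J = ((0, f), (1, 0))`. A non-scalar element `a + bJ` (so `b ≠ 0`) generates this
algebra, and its centralizer in the matrix algebra is again `K[J]`. Hence `T_f` is the image of the
centralizer of a lift of any of its non-identity elements (`pgl_mem_Tset_iff_commute`). Conjugation
carries centralizers to centralizers, so if `φAφ⁻¹ ∈ T_g`, then `φ T_f φ⁻¹` and `T_g` are both the
image of the centralizer of a lift of `φAφ⁻¹`.
-/

open Matrix Polynomial

lemma pgl_surjective (K : Type*) [Field K] : Function.Surjective (pgl K) :=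
  QuotientGroup.mk'_surjective _

lemma pgl_eq_one_iff {K : Type*} [Field K] (M : GL2 K) :
    pgl K M = 1 ↔ M ∈ Subgroup.center (GL2 K) :=
  QuotientGroup.eq_one_iff M

/-- Whether two elements of `GL₂(K)` commute depends on the first one only through its class
in `PGL₂(K)`. -/
lemma commute_congr_left {K : Type*} [Field K] {M M' N : GL2 K} (h : pgl K M = pgl K M') :
    Commute M N ↔ Commute M' N := by
  have hz : M'⁻¹ * M ∈ Subgroup.center (GL2 K) := by
    rw [← pgl_eq_one_iff, map_mul, map_inv, h, inv_mul_cancel]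
  have hc : Commute (M'⁻¹ * M) N := (Subgroup.mem_center_iff.mp hz N).symm
  constructor
  · intro hM
    simpa using hM.mul_left hc.inv_left
  · intro hM
    simpa using hM.mul_left hc

/-- If `A` lifts a non-identity element of `T_f`, then `T_f` is the image in `PGL₂(K)` of the
centralizer of `A`. -/
lemma pgl_mem_Tset_iff_commute {K : Type*} [Field K] {f : K} {A : GL2 K}
    (hA : pgl K A ∈ Tset K f) (hA1 : pgl K A ≠ 1) (M : GL2 K) :
    pgl K M ∈ Tset K f ↔ Commute M A := by
  obtain ⟨A', a, b, -, hA', hAA'⟩ := hA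
  rw [Commute.symm_iff, commute_congr_left hAA', Commute.symm_iff]
  constructor
  · rintro ⟨M', c, d, -, hM', hMM'⟩
    rw [commute_congr_left hMM']
    apply Units.ext
    rw [Units.val_mul, Units.val_mul, hM', hA']
    ext i j
    fin_cases i <;> fin_cases j <;> simp [Matrix.mul_apply, Fin.sum_univ_two] <;> ring
  · intro h
    -- If `b` vanished, `A'` would be a scalar matrix, hence trivial in `PGL₂(K)`.
    have hb : b ≠ 0 := by
      rintro rfl
      apply hA1
      rw [hAA', pgl_eq_one_iff, Subgroup.mem_center_iff]
      intro N
      apply Units.ext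
      rw [Units.val_mul, Units.val_mul, hA']
      ext i j
      fin_cases i <;> fin_cases j <;> simp [Matrix.mul_apply, Fin.sum_univ_two, mul_comm]
    have h' : (M : Matrix (Fin 2) (Fin 2) K) * A' = A' * M := congrArg Units.val h.eq
    rw [hA'] at h'
    have h00 := congrFun (congrFun h' 0) 0
    have h10 := congrFun (congrFun h' 1) 0
    simp [Matrix.mul_apply, Fin.sum_univ_two] at h00 h10
    have h01 : (M : Matrix (Fin 2) (Fin 2) K) 0 1 = M 1 0 * f :=
      mul_left_cancel₀ hb (by linear_combination h00)
    have h11 : (M : Matrix (Fin 2) (Fin 2) K) 1 1 = M 0 0 :=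
      mul_left_cancel₀ hb (by linear_combination h10)
    refine ⟨M, M 0 0, M 1 0, ?_, ?_, rfl⟩
    · rintro ⟨h0, h1⟩
      have hdet := ((Matrix.isUnit_iff_isUnit_det _).mp M.isUnit).ne_zero
      rw [Matrix.det_fin_two, h0, h1] at hdet
      simp at hdet
    · ext i j
      fin_cases i <;> fin_cases j <;> simp [h01, h11]

/-- For nonsquare `f, g ∈ K`, `φ ∈ PGL₂(K)` and a non-identity element `A` of `T_f`:
`φ·T_f·φ⁻¹ = T_g` if and only if `φ·A·φ⁻¹ ∈ T_g`. -/
theorem stmt7 (K : Type*) [Field K] (f g : K) (hf : ¬ IsSquare f) (hg : ¬ IsSquare g)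
    (φ : PGL2 K) (A : PGL2 K) (hA : A ∈ Tset K f) (hA1 : A ≠ 1) :
    (fun x => φ * x * φ⁻¹) '' Tset K f = Tset K g ↔ φ * A * φ⁻¹ ∈ Tset K g := by
  constructor
  · intro h
    rw [← h]
    exact ⟨A, hA, rfl⟩
  · intro h
    have h1 : φ * A * φ⁻¹ ≠ 1 := fun h1 => hA1 (conj_eq_one_iff.mp h1)
    have himage : ∀ x, x ∈ (fun x => φ * x * φ⁻¹) '' Tset K f ↔ φ⁻¹ * x * φ ∈ Tset K f := by
      intro x
      constructor
      · rintro ⟨y, hy, rfl⟩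
        simpa [mul_assoc] using hy
      · intro hx
        exact ⟨_, hx, by simp [mul_assoc]⟩
    obtain ⟨Φ, rfl⟩ := pgl_surjective K φ
    obtain ⟨A, rfl⟩ := pgl_surjective K A
    rw [← map_inv, ← map_mul, ← map_mul] at h h1
    ext x
    obtain ⟨X, rfl⟩ := pgl_surjective K x
    rw [himage, ← map_inv, ← map_mul, ← map_mul, pgl_mem_Tset_iff_commute hA hA1,
      pgl_mem_Tset_iff_commute h h1, ← Commute.conj_iff Φ]
    simp [mul_assoc]
end

section
/- Let K be a field of characteristic different from 2 and let f, g ∈ K be nonsquare elements. Then the following are equivalent: (1) the subgroups T_f and T_g are conjugate in PGL₂(K); (2) the fields K[X]/(X²−f) and K[X]/(X²−g) are isomorphic as K-algebras; (3) the ratio f/g is a square in K, i.e. there exists h ∈ K with f = g·h². -/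
/-!
The field side and the group side both read off the class of `f` modulo squares.

In `K[X]/(X² - g)` with `r² = g`, every element is `u + v r`, and `(u + v r)² = f` forces
`u v = 0` in characteristic different from 2; since `f` is not a square, `u = 0` and `f = g v²`
(`exists_sq_of_sq_eq`). Conversely, when `f = g h²`, sending a square root of `f` to `h r` is an
isomorphism.

In `PGL₂(K)`, the class of `!![0, f; 1, 0]` lies in `T_f`. A conjugate of this matrix has trace
zero and determinant `-f`; if it is `c • !![a, b g; b, a]`, the trace gives `a = 0` and the
determinant gives `f = g (c b)²` (`exists_sq_of_conj`). Conversely, when `f = g h²`, conjugation by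
`diag(1, h)` carries `T_f` onto `T_g` (`conj_diag_mem`).
-/

open Matrix Polynomial

/-- The element `diag(1, h)` of `GL₂(K)`, for `h ≠ 0`. -/
def diagOne {K : Type*} [Field K] (h : K) (hh : h ≠ 0) : GL2 K where
  val := !![1, 0; 0, h]
  inv := !![1, 0; 0, h⁻¹]
  val_inv := by simp [Matrix.one_fin_two, hh]
  inv_val := by simp [Matrix.one_fin_two, hh]

lemma diagOne_inv {K : Type*} [Field K] (h : K) (hh : h ≠ 0) :
    (diagOne h hh)⁻¹ = diagOne h⁻¹ (inv_ne_zero hh) := by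
  ext1
  rfl

lemma conj_diag_mem {K : Type*} [Field K] {f g h : K} (hh : h ≠ 0) (hfg : f = g * h ^ 2)
    {x : PGL2 K} (hx : x ∈ Tset K f) :
    pgl K (diagOne h hh) * x * (pgl K (diagOne h hh))⁻¹ ∈ Tset K g := by
  obtain ⟨M, a, b, hab, hM, rfl⟩ := hx
  refine ⟨diagOne h hh * M * (diagOne h hh)⁻¹, a, b * h, by simpa [hh] using hab, ?_, by simp⟩
  rw [diagOne_inv, Units.val_mul, Units.val_mul, hM]
  simp only [diagOne, Matrix.mul_fin_two]
  have h01 : b * f * h⁻¹ = b * h * g := by rw [hfg]; field_simp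
  have h11 : h * a * h⁻¹ = a := by field_simp
  simp [h01, h11, mul_comm h b]

lemma exists_sq_of_conj {K : Type*} [Field K] (h2 : (2 : K) ≠ 0) {f g : K} (hf : f ≠ 0)
    {φ : PGL2 K} (h : (fun x => φ * x * φ⁻¹) '' Tset K f = Tset K g) :
    ∃ h : K, f = g * h ^ 2 := by
  obtain ⟨P, rfl⟩ := QuotientGroup.mk'_surjective _ φ
  let M : GL2 K := Matrix.GeneralLinearGroup.mkOfDetNeZero !![0, f; 1, 0] (by simpa using hf)
  have hM : (M : Matrix (Fin 2) (Fin 2) K) = !![0, f; 1, 0] := rfl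
  have hmem : pgl K M ∈ Tset K f := ⟨M, 0, 1, by simp, by simp [hM], rfl⟩
  obtain ⟨N, a, b, -, hN, hMN⟩ := h.subset (Set.mem_image_of_mem _ hmem)
  have hMN' : pgl K N = pgl K (P * M * P⁻¹) := by
    rw [← hMN]; simp [pgl]
  obtain ⟨z, hz, hNz⟩ := (QuotientGroup.mk'_eq_mk' _).1 hMN'
  rw [Matrix.GeneralLinearGroup.center_eq_range_scalar] at hz
  obtain ⟨c, rfl⟩ := hz
  have hval := congrArg (Units.val) hNz
  have htr := congrArg Matrix.trace hval
  have hdet := congrArg Matrix.det hval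
  have e1 : Matrix.trace (P * M * P⁻¹ : GL2 K).val = 0 := by
    rw [Units.val_mul, Matrix.trace_mul_comm, ← Units.val_mul, ← mul_assoc, inv_mul_cancel,
      one_mul, hM]
    simp [Matrix.trace_fin_two]
  have e2 : Matrix.det (P * M * P⁻¹ : GL2 K).val = -f := by
    rw [Units.val_mul, Matrix.det_mul_comm, ← Units.val_mul, ← mul_assoc, inv_mul_cancel,
      one_mul, hM]
    simp
  rw [e1, Units.val_mul, hN] at htr
  rw [e2, Units.val_mul, hN] at hdet
  simp [Matrix.trace_fin_two] at htr
  simp [Matrix.det_fin_two] at hdet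
  have ha : a = 0 := by
    have hc : (c : K) ≠ 0 := c.ne_zero
    have : 2 * (c : K) * a = 0 := by linear_combination htr
    simpa [h2, hc] using this
  subst ha
  exact ⟨c * b, by linear_combination hdet⟩

lemma exists_sq_of_sq_eq {K : Type*} [Field K] (h2 : (2 : K) ≠ 0) {f g : K} (hf : ¬ IsSquare f)
    (y : AdjoinRoot (X ^ 2 - C g)) (hy : y ^ 2 = AdjoinRoot.of _ f) :
    ∃ h : K, f = g * h ^ 2 := by
  obtain ⟨p, rfl⟩ := AdjoinRoot.mk_surjective y
  have hmon : (X ^ 2 - C g : K[X]).Monic := monic_X_pow_sub_C g two_ne_zero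
  have hdeg : (X ^ 2 - C g : K[X]).degree = 2 := degree_X_pow_sub_C two_pos g
  -- Replace the representative by its remainder `v X + u`.
  rw [← AdjoinRoot.mk_leftInverse hmon (AdjoinRoot.mk _ p), AdjoinRoot.modByMonicHom_mk] at hy
  have hlt : (p %ₘ (X ^ 2 - C g)).degree ≤ 1 := by
    have := degree_modByMonic_lt p hmon
    rw [hdeg] at this
    exact Order.le_of_lt_succ this
  obtain ⟨v, u, hp⟩ : ∃ v u : K, p %ₘ (X ^ 2 - C g) = C v * X + C u :=
    ⟨_, _, eq_X_add_C_of_degree_le_one hlt⟩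
  rw [hp, ← AdjoinRoot.mk_C, ← map_pow, AdjoinRoot.mk_eq_mk] at hy
  have hdvd : (X ^ 2 - C g : K[X]) ∣ C (2 * u * v) * X + C (u ^ 2 + g * v ^ 2 - f) := by
    have := dvd_sub hy (Dvd.intro_left (C (v ^ 2)) rfl)
    convert this using 1
    simp only [map_mul, map_add, map_sub, map_pow, map_ofNat]
    ring
  have hzero := eq_zero_of_dvd_of_degree_lt hdvd (by
    rw [hdeg]
    exact degree_linear_le.trans_lt (by norm_num))
  have c0 : u ^ 2 + g * v ^ 2 - f = 0 := by
    have := congrArg (coeff · 0) hzero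
    simpa only [coeff_add, coeff_C_mul, coeff_X_zero, mul_zero, zero_add, coeff_C_zero,
      coeff_zero] using this
  have c1 : 2 * u * v = 0 := by
    have := congrArg (coeff · 1) hzero
    simpa only [coeff_add, coeff_C_mul, coeff_X_one, mul_one, coeff_C_succ, add_zero,
      coeff_zero] using this
  obtain rfl | rfl : u = 0 ∨ v = 0 := by simpa [h2] using c1
  · exact ⟨v, by linear_combination -c0⟩
  · exact absurd ⟨u, by linear_combination -c0⟩ hf

/-- For `f = g h²`, the map `K[X]/(X² - f) → K[X]/(X² - g)` sending the adjoined root of `f` to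
`h` times the adjoined root of `g`. -/
noncomputable def scaleRoot {K : Type*} [Field K] {f g : K} (h : K) (hfg : f = g * h ^ 2) :
    AdjoinRoot (X ^ 2 - C f) →ₐ[K] AdjoinRoot (X ^ 2 - C g) :=
  AdjoinRoot.liftAlgHom _ (Algebra.ofId K _) (h • AdjoinRoot.root _) (by
    have hr := AdjoinRoot.eval₂_root (X ^ 2 - C g)
    simp only [eval₂_sub, eval₂_pow, eval₂_X, eval₂_C, sub_eq_zero] at hr
    rw [eval₂_sub, eval₂_pow, eval₂_X, eval₂_C, _root_.smul_pow, hr, sub_eq_zero, hfg, mul_comm g,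
      ← smul_eq_mul, Algebra.smul_def]
    exact (map_mul (AdjoinRoot.of (X ^ 2 - C g)) _ _).symm)

lemma nonempty_algEquiv {K : Type*} [Field K] {f g h : K} (hh : h ≠ 0) (hfg : f = g * h ^ 2) :
    Nonempty (AdjoinRoot (X ^ 2 - C f) ≃ₐ[K] AdjoinRoot (X ^ 2 - C g)) := by
  have hgf : g = f * h⁻¹ ^ 2 := by rw [hfg]; field_simp
  refine ⟨AlgEquiv.ofAlgHom (scaleRoot h hfg) (scaleRoot h⁻¹ hgf) ?_ ?_⟩ <;>
  · apply AdjoinRoot.algHom_ext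
    simp [scaleRoot, smul_smul, hh]

/-- Let K be a field of characteristic ≠ 2 and `f, g ∈ K` nonsquare elements. The following
are equivalent: (1) `T_f` and `T_g` are conjugate in PGL₂(K); (2) the fields `K[X]/(X²−f)`
and `K[X]/(X²−g)` are isomorphic as K-algebras; (3) `f/g` is a square in K. -/
theorem stmt8 (K : Type*) [Field K] (hchar : ringChar K ≠ 2)
    (f g : K) (hf : ¬ IsSquare f) (hg : ¬ IsSquare g) :
    List.TFAE [
      ∃ φ : PGL2 K, (fun x => φ * x * φ⁻¹) '' Tset K f = Tset K g,
      Nonempty (AdjoinRoot (X ^ 2 - C f) ≃ₐ[K] AdjoinRoot (X ^ 2 - C g)),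
      ∃ h : K, f = g * h ^ 2 ] := by
  have h2 : (2 : K) ≠ 0 := Ring.two_ne_zero hchar
  have hf0 : f ≠ 0 := by rintro rfl; exact hf IsSquare.zero
  have hne : ∀ h : K, f = g * h ^ 2 → h ≠ 0 := by
    rintro h hfg rfl
    simp [hf0] at hfg
  tfae_have 1 → 3 := fun ⟨φ, h⟩ => exists_sq_of_conj h2 hf0 h
  tfae_have 3 → 1 := by
    rintro ⟨h, hfg⟩
    have hh := hne h hfg
    have hgf : g = f * h⁻¹ ^ 2 := by rw [hfg]; field_simp
    refine ⟨pgl K (diagOne h hh), Set.Subset.antisymm ?_ fun x hx => ?_⟩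
    · rintro _ ⟨x, hx, rfl⟩
      exact conj_diag_mem hh hfg hx
    · refine ⟨_, conj_diag_mem (inv_ne_zero hh) hgf hx, ?_⟩
      have hinv : pgl K (diagOne h⁻¹ (inv_ne_zero hh)) = (pgl K (diagOne h hh))⁻¹ := by
        rw [← diagOne_inv h hh, map_inv]
      simp only [hinv]
      group
  tfae_have 2 → 3 := by
    rintro ⟨e⟩
    refine exists_sq_of_sq_eq h2 hf (e (AdjoinRoot.root _)) ?_
    have hr := AdjoinRoot.eval₂_root (X ^ 2 - C f)
    simp only [eval₂_sub, eval₂_pow, eval₂_X, eval₂_C, sub_eq_zero] at hr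
    rw [← map_pow, hr]
    exact e.commutes f
  tfae_have 3 → 2 := fun ⟨h, hfg⟩ => nonempty_algEquiv (hne h hfg) hfg
  tfae_finish
end

section
/- Let K = ℂ(y) be the field of rational functions in one variable over ℂ, let f ∈ K be an element that is not a square in K, and let a, b ∈ K with a ≠ 0 and b ≠ 0. Then a² − b²·f ≠ 0, and the rational function 4a²/(a² − b²·f) is not a constant, i.e. it does not lie in the image of the canonical embedding ℂ → ℂ(y). (Equivalently: the Baum–Bott index tr(M)²/det(M) of the matrix M = ((a, b·f), (b, a)) is nonconstant.) -/
/-!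
If `a² - b² f` vanished, or if `4a² / (a² - b² f)` were a constant `c` (necessarily nonzero), then
`f` would be a constant multiple of `(a / b)²`. Since `ℂ` is algebraically closed, that constant is
a square, so `f` would be a square in `ℂ(y)`.
-/

/-- Let K = ℂ(y), `f ∈ K` a nonsquare, and `a, b ∈ K` both nonzero. Then `a² − b²·f ≠ 0`
and the rational function `4a²/(a² − b²f)` (the Baum–Bott index of ((a, b·f), (b, a))) is
not a constant. -/
theorem stmt11 (f a b : RatFunc ℂ) (hf : ¬ IsSquare f) (ha : a ≠ 0) (hb : b ≠ 0) :
    a ^ 2 - b ^ 2 * f ≠ 0 ∧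
    ∀ c : ℂ, (4 * a ^ 2) / (a ^ 2 - b ^ 2 * f) ≠ RatFunc.C c := by
  have h0 : a ^ 2 - b ^ 2 * f ≠ 0 := by
    intro h
    apply hf
    refine ⟨a / b, ?_⟩
    field_simp
    linear_combination -h
  refine ⟨h0, fun c hc => ?_⟩
  rw [div_eq_iff h0] at hc
  have h4 : (RatFunc.C (4 : ℂ)) = 4 := map_ofNat _ 4
  have h4' : (4 : RatFunc ℂ) ≠ 0 := by
    rw [← h4]
    exact (map_ne_zero RatFunc.C).2 (by norm_num)
  have hc0 : c ≠ 0 := by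
    rintro rfl
    rw [map_zero, zero_mul] at hc
    exact mul_ne_zero h4' (pow_ne_zero 2 ha) hc
  -- Solving for `f` gives `f = ((c - 4) / c) * (a / b) ^ 2`.
  obtain ⟨d, hd⟩ := IsAlgClosed.exists_pow_nat_eq ((c - 4) / c) two_pos
  have hd' : RatFunc.C c * RatFunc.C d ^ 2 = RatFunc.C c - 4 := by
    rw [← map_pow, ← map_mul, hd, mul_div_cancel₀ _ hc0, map_sub, h4]
  have hC : RatFunc.C c ≠ 0 := (map_ne_zero _).2 hc0
  apply hf
  refine ⟨RatFunc.C d * a / b, ?_⟩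
  field_simp
  apply mul_left_cancel₀ hC
  linear_combination hc - a ^ 2 * hd'
end

section
/- Let L be a number field, i.e. a finite field extension of ℚ. Then the multiplicative group Lˣ is isomorphic, as an abstract group, to the direct product of its torsion subgroup (the finite group of roots of unity contained in L) and a free abelian group of countably infinite rank (i.e. ⊕_{n ∈ ℕ} ℤ). -/
/-!
Sending `x ∈ Lˣ` to its vector of `𝔭`-adic valuations is a homomorphism from `Lˣ` to the free
abelian group on the nonzero primes of the ring of integers (`valVec`). Its kernel is the group of
units of the ring of integers (`exists_unit_of_valVec_eq_zero`), which is finitely generated by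
Dirichlet's theorem, so that the kernel modulo torsion is free. Its image is a subgroup of a free
abelian group, hence free (`free_submodule_finsupp`). The valuation map therefore splits, and
`Lˣ` maps onto the free group (kernel modulo torsion) × (image), with kernel exactly the torsion
subgroup (`exists_surjective_ker_torsion`). This second surjection splits as well
(`nonempty_mulEquiv_torsion_prod`).

The rank is countable because `L` is. It is infinite because each nonzero prime `𝔭` contains an
element of `Lˣ` of nonzero valuation, so a finitely generated image would leave only finitely many
primes, whereas there is one above each rational prime (`infinite_heightOneSpectrum`). Finally, a
torsion element of `Lˣ` has all valuations zero, so it comes from a torsion unit of the ring of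
integers, and there are finitely many of these.
-/

open IsDedekindDomain NumberField

/-! ### Free abelian groups and splittings -/

/-- A submodule of a free module over a principal ideal domain is free, whatever the rank.
The index set is well ordered; for each `i`, one picks an element of `N` supported on indices
`≤ i` whose `i`-th coordinate generates the ideal of all such coordinates, and the nonzero choices
form a basis. -/
lemma free_submodule_finsupp {R ι : Type*} [CommRing R] [IsDomain R] [IsPrincipalIdealRing R]
    (N : Submodule R (ι →₀ R)) : Module.Free R N := by
  classical
  obtain ⟨_, _⟩ := exists_wellFoundedLT ι
  let P : ι → Submodule R (ι →₀ R) := fun i => N ⊓ Finsupp.supported R R (Set.Iic i)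
  let D : ι → Ideal R := fun i => (P i).map (Finsupp.lapply i)
  have hd : ∀ i, ∃ b ∈ P i, b i = Submodule.IsPrincipal.generator (D i) := fun i => by
    obtain ⟨b, hb, h⟩ := Submodule.mem_map.1 (Submodule.IsPrincipal.generator_mem (D i))
    exact ⟨b, hb, h⟩
  choose b hbP hbd using hd
  have hsupp : ∀ i j, i < j → b i j = 0 := fun i j hij => by
    by_contra h
    exact absurd ((Finsupp.mem_supported R _).1 (hbP i).2 (Finsupp.mem_support_iff.2 h))
      (not_le.2 hij)
  let I := {i : ι // b i i ≠ 0}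
  let c : I → N := fun i => ⟨b i.1, (hbP i.1).1⟩
  have hli : LinearIndependent R fun k : I => b k.1 := by
    rw [linearIndependent_iff]
    intro l hl
    by_contra hne
    have hs : l.support.Nonempty := Finsupp.support_nonempty_iff.2 hne
    -- at the largest index with nonzero coefficient, only one term contributes
    set m := l.support.max' hs with hm
    have hmem : m ∈ l.support := l.support.max'_mem hs
    have h0 : (Finsupp.linearCombination R (fun k : I => b k.1) l) m.1 = 0 := by rw [hl]; rfl
    rw [Finsupp.linearCombination_apply, Finsupp.sum, Finsupp.finsetSum_apply,
      Finset.sum_eq_single m] at h0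
    · simp only [Finsupp.smul_apply, smul_eq_mul] at h0
      exact (mul_ne_zero (Finsupp.mem_support_iff.1 hmem) m.2) h0
    · intro j hj hjm
      have hlt : j < m := lt_of_le_of_ne (l.support.le_max' j hj) hjm
      simp only [Finsupp.smul_apply, smul_eq_mul]
      rw [hsupp _ _ hlt, mul_zero]
    · intro h; exact absurd hmem h
  have key : ∀ i, ∀ x ∈ P i, x ∈ Submodule.span R (Set.range fun k : I => b k.1) := by
    intro i
    induction i using WellFoundedLT.induction with
    | ind i ih =>
      intro x hx
      obtain ⟨k, hk⟩ := (Submodule.IsPrincipal.mem_iff_eq_smul_generator (D i)).1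
        (Submodule.mem_map_of_mem (f := Finsupp.lapply i) hx)
      rw [← hbd, Finsupp.lapply_apply, smul_eq_mul] at hk
      have hkb : k • b i ∈ Submodule.span R (Set.range fun k : I => b k.1) ∨ b i i = 0 := by
        by_cases h : b i i = 0
        · exact Or.inr h
        · exact Or.inl (Submodule.smul_mem _ _ (Submodule.subset_span ⟨⟨i, h⟩, rfl⟩))
      -- an element of `P i` with vanishing `i`-th coordinate lies in some `P j` with `j < i`
      have low : ∀ y ∈ P i, y i = 0 →
          y ∈ Submodule.span R (Set.range fun k : I => b k.1) := by
        intro y hy hyi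
        by_cases hy0 : y = 0
        · rw [hy0]; exact Submodule.zero_mem _
        have hs : y.support.Nonempty := Finsupp.support_nonempty_iff.2 hy0
        have hmem := y.support.max'_mem hs
        refine ih (y.support.max' hs) (lt_of_le_of_ne
          ((Finsupp.mem_supported R _).1 hy.2 hmem) ?_) y ⟨hy.1, ?_⟩
        · intro h
          rw [h] at hmem
          exact Finsupp.mem_support_iff.1 hmem hyi
        · exact (Finsupp.mem_supported R _).2 fun j hj => y.support.le_max' j hj
      rcases hkb with h | h
      · rw [← sub_add_cancel x (k • b i)]
        refine Submodule.add_mem _ (low _ (Submodule.sub_mem _ hx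
          (Submodule.smul_mem _ _ (hbP i))) ?_) h
        simp [hk]
      · exact low x hx (by rw [hk, h, mul_zero])
  have hsp : ⊤ ≤ Submodule.span R (Set.range c) := by
    rintro ⟨x, hx⟩ -
    have hx' : x ∈ Submodule.span R (Set.range fun k : I => b k.1) := by
      by_cases hx0 : x = 0
      · rw [hx0]; exact Submodule.zero_mem _
      have hs : x.support.Nonempty := Finsupp.support_nonempty_iff.2 hx0
      exact key (x.support.max' hs) x ⟨hx, (Finsupp.mem_supported R _).2
        fun j hj => x.support.le_max' j hj⟩
    have : (Set.range fun k : I => b k.1) = N.subtype '' Set.range c := by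
      rw [← Set.range_comp]; rfl
    rw [this, Submodule.span_image, Submodule.mem_map] at hx'
    obtain ⟨y, hy, hyx⟩ := hx'
    have : y = ⟨x, hx⟩ := Subtype.ext hyx
    exact this ▸ hy
  have hli' : LinearIndependent R c := LinearIndependent.of_comp N.subtype hli
  exact Module.Free.of_basis (Module.Basis.mk hli' hsp)

/-- A homomorphism onto a free abelian group splits, here in the case where its kernel is the
torsion subgroup. -/
lemma nonempty_mulEquiv_torsion_prod {A F : Type*} [CommGroup A] [AddCommGroup F]
    [Module.Free ℤ F] (f : Additive A →ₗ[ℤ] F) (hf : Function.Surjective f)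
    (hker : ∀ x : A, f (Additive.ofMul x) = 0 ↔ x ∈ CommGroup.torsion A) :
    Nonempty (A ≃* CommGroup.torsion A × Multiplicative F) := by
  obtain ⟨s, hs⟩ := Module.projective_lifting_property f LinearMap.id hf
  have hs' : ∀ y, f (s y) = y := fun y => LinearMap.congr_fun hs y
  let g : CommGroup.torsion A × Multiplicative F →* A :=
    (CommGroup.torsion A).subtype.coprod (AddMonoidHom.toMultiplicativeLeft s.toAddMonoidHom)
  have hg : ∀ p, g p = p.1.1 * (s p.2.toAdd).toMul := fun p => rfl
  have hfg : ∀ p, f (Additive.ofMul (g p)) = p.2.toAdd := fun p => by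
    rw [hg, ofMul_mul, map_add, (hker _).2 p.1.2, zero_add, ofMul_toMul, hs']
  refine ⟨(MulEquiv.ofBijective g ⟨?_, ?_⟩).symm⟩
  · intro p q h
    have h2 : p.2 = q.2 := by
      have := hfg p
      rw [h, hfg q] at this
      exact (Multiplicative.toAdd.injective this).symm
    rw [hg, hg, h2] at h
    exact Prod.ext (Subtype.ext (mul_right_cancel h)) h2
  · intro x
    refine ⟨(⟨x / (s (f (Additive.ofMul x))).toMul, ?_⟩,
      Multiplicative.ofAdd (f (Additive.ofMul x))), ?_⟩
    · rw [← hker, ofMul_div, map_sub, ofMul_toMul, hs', sub_self]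
    · rw [hg]; simp

/-- If `v` has finitely generated kernel, a splitting of `v` onto its image (which is free, by
`free_submodule_finsupp`) produces a projection of `M` to `ker v`; combined with `v` itself it
gives a surjection from `M` whose kernel is the torsion of `M`. The target is free, since a
finitely generated torsion-free abelian group is free. -/
lemma exists_surjective_ker_torsion {M ι : Type*} [AddCommGroup M] (v : M →ₗ[ℤ] (ι →₀ ℤ))
    [Module.Finite ℤ (LinearMap.ker v)] :
    ∃ f : M →ₗ[ℤ] (LinearMap.ker v ⧸ Submodule.torsion ℤ (LinearMap.ker v)) × LinearMap.range v,
      Function.Surjective f ∧ ∀ x, f x = 0 ↔ IsOfFinAddOrder x := by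
  have := free_submodule_finsupp (LinearMap.range v)
  obtain ⟨s, hs⟩ := Module.projective_lifting_property v.rangeRestrict LinearMap.id
    v.surjective_rangeRestrict
  have hs' : ∀ y, v (s y) = y := fun y => congrArg Subtype.val (LinearMap.congr_fun hs y)
  let p : M →ₗ[ℤ] LinearMap.ker v :=
    (LinearMap.id - s ∘ₗ v.rangeRestrict).codRestrict _ (fun x => by simp [hs'])
  have hp : ∀ x, (p x : M) = x - s (v.rangeRestrict x) := fun x => rfl
  refine ⟨((Submodule.mkQ _).comp p).prod v.rangeRestrict, ?_, ?_⟩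
  · rintro ⟨u, n⟩
    obtain ⟨u, rfl⟩ := Submodule.mkQ_surjective _ u
    have hn : v.rangeRestrict (u + s n) = n := Subtype.ext (by simp [hs'])
    have hu : p (u + s n) = u := Subtype.ext (by rw [hp, hn, add_sub_cancel_right])
    refine ⟨u + s n, Prod.ext ?_ hn⟩
    exact congrArg (Submodule.mkQ _) hu
  · intro x
    change (Submodule.Quotient.mk (p x), v.rangeRestrict x) = 0 ↔ _
    rw [Prod.mk_eq_zero, Submodule.Quotient.mk_eq_zero, Submodule.mem_torsion_iff]
    constructor
    · rintro ⟨⟨a, ha⟩, h0⟩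
      have ha' := congrArg Subtype.val ha
      rw [isOfFinAddOrder_iff_zsmul_eq_zero]
      refine ⟨a, nonZeroDivisors.coe_ne_zero a, ?_⟩
      have : (p x : M) = x := by rw [hp, h0, map_zero, sub_zero]
      rw [← this]; exact ha'
    · intro h
      obtain ⟨n, hn, hx⟩ := isOfFinAddOrder_iff_zsmul_eq_zero.1 h
      refine ⟨⟨⟨n, mem_nonZeroDivisors_of_ne_zero hn⟩, ?_⟩, ?_⟩
      · change n • p x = 0
        rw [← map_zsmul, hx, map_zero]
      · have : n • v.rangeRestrict x = 0 := by rw [← map_zsmul, hx, map_zero]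
        exact (smul_eq_zero.1 this).resolve_left hn

/-! ### The valuation vector of a nonzero element -/

/-- The vector of (additive) valuations of a nonzero element at all nonzero primes of `𝓞 L`. The sign is that of
`HeightOneSpectrum.valuation`: a uniformizer has value `-1`. -/
noncomputable def valVec (L : Type*) [Field L] [NumberField L] :
    Additive Lˣ →ₗ[ℤ] (HeightOneSpectrum (𝓞 L) →₀ ℤ) :=
  AddMonoidHom.toIntLinearMap
    { toFun := fun x => Finsupp.ofSupportFinite
        (fun v => (v.valuationOfNeZero (x.toMul)).toAdd) (by
          -- a nonzero valuation means that `x` or `x⁻¹` is not integral at `v`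
          refine ((HeightOneSpectrum.Support.finite (𝓞 L) (x.toMul : L)).union
            (HeightOneSpectrum.Support.finite (𝓞 L) ((x.toMul⁻¹ : Lˣ) : L))).subset ?_
          intro v hv
          by_contra h
          simp only [HeightOneSpectrum.Support, Set.mem_union, Set.mem_ofPred_eq, not_or,
            not_lt] at h
          obtain ⟨h1, h2⟩ := h
          rw [← HeightOneSpectrum.valuationOfNeZero_eq, ← WithZero.coe_one,
            WithZero.coe_le_coe] at h1 h2
          rw [map_inv, inv_le_one'] at h2
          exact hv (toAdd_eq_zero.2 (le_antisymm h1 h2)))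
      map_zero' := by ext v; exact congrArg Multiplicative.toAdd (map_one v.valuationOfNeZero)
      map_add' := fun x y => by
        ext v
        exact congrArg Multiplicative.toAdd (map_mul v.valuationOfNeZero x.toMul y.toMul) }

section

variable {L : Type*} [Field L] [NumberField L]

lemma valVec_apply (x : Additive Lˣ) (v : HeightOneSpectrum (𝓞 L)) :
    valVec L x v = (v.valuationOfNeZero (x.toMul)).toAdd := rfl

lemma valVec_apply_eq_zero (x : Additive Lˣ) (v : HeightOneSpectrum (𝓞 L)) :
    valVec L x v = 0 ↔ v.valuation L (x.toMul : L) = 1 := by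
  rw [valVec_apply, toAdd_eq_zero, ← HeightOneSpectrum.valuationOfNeZero_eq, ← WithZero.coe_one,
    WithZero.coe_inj]

/-- An element all of whose valuations vanish is integral together with its inverse. -/
lemma exists_unit_of_valVec_eq_zero (x : Additive Lˣ) (hx : valVec L x = 0) :
    ∃ u : (𝓞 L)ˣ, Units.map (algebraMap (𝓞 L) L : 𝓞 L →* L) u = x.toMul := by
  have h : ∀ v : HeightOneSpectrum (𝓞 L), v.valuation L (x.toMul : L) = 1 := fun v =>
    (valVec_apply_eq_zero x v).1 (by rw [hx]; rfl)
  obtain ⟨a, ha⟩ := HeightOneSpectrum.mem_integers_of_valuation_le_one L (x.toMul : L)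
    fun v => (h v).le
  obtain ⟨b, hb⟩ := HeightOneSpectrum.mem_integers_of_valuation_le_one L
    ((x.toMul⁻¹ : Lˣ) : L) fun v => by rw [Units.val_inv_eq_inv_val, map_inv₀, h v, inv_one]
  have hab : a * b = 1 := by
    apply IsFractionRing.injective (𝓞 L) L
    rw [map_mul, ha, hb, map_one, Units.mul_inv]
  exact ⟨⟨a, b, hab, by rw [mul_comm, hab]⟩, Units.ext ha⟩

/-- The kernel is contained in the image of `(𝓞 L)ˣ`, which is finitely generated by Dirichlet's
unit theorem. -/
instance : Module.Finite ℤ (LinearMap.ker (valVec L)) := by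
  let g : Additive (𝓞 L)ˣ →ₗ[ℤ] Additive Lˣ :=
    (MonoidHom.toAdditive (Units.map (algebraMap (𝓞 L) L : 𝓞 L →* L))).toIntLinearMap
  have hle : LinearMap.ker (valVec L) ≤ LinearMap.range g := fun x hx => by
    obtain ⟨u, hu⟩ := exists_unit_of_valVec_eq_zero x hx
    exact ⟨Additive.ofMul u, congrArg Additive.ofMul hu⟩
  exact Module.Finite.of_injective (Submodule.inclusion hle) (Submodule.inclusion_injective hle)

lemma finite_torsion_units : Finite (CommGroup.torsion Lˣ) := by
  have hinj : Function.Injective (Units.map (algebraMap (𝓞 L) L : 𝓞 L →* L)) :=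
    Units.map_injective (IsFractionRing.injective (𝓞 L) L)
  have hfin : ((Units.map (algebraMap (𝓞 L) L : 𝓞 L →* L)) ''
      (NumberField.Units.torsion L : Set (𝓞 L)ˣ)).Finite :=
    (Set.finite_coe_iff.1 (inferInstance : Finite (NumberField.Units.torsion L))).image _
  refine (hfin.subset ?_).to_subtype
  intro x hx
  obtain ⟨n, hn, hxn⟩ := isOfFinOrder_iff_pow_eq_one.1 hx
  have h0 : valVec L (Additive.ofMul x) = 0 := by
    have : n • valVec L (Additive.ofMul x) = 0 := by
      rw [← map_nsmul, ← ofMul_pow, hxn, ofMul_one, map_zero]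
    exact (smul_eq_zero.1 this).resolve_left hn.ne'
  obtain ⟨u, hu⟩ := exists_unit_of_valVec_eq_zero _ h0
  refine ⟨u, ?_, hu⟩
  rw [SetLike.mem_coe, NumberField.Units.torsion, CommGroup.mem_torsion,
    ← hinj.isOfFinOrder_iff, hu]
  exact hx

/-! ### Infinitude of the rank -/

variable (L) in
lemma infinite_heightOneSpectrum : Infinite (HeightOneSpectrum (𝓞 L)) := by
  have h : ∀ p : Nat.Primes, ∃ v : HeightOneSpectrum (𝓞 L), ((p : ℕ) : 𝓞 L) ∈ v.asIdeal := by
    intro p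
    have hnu : ¬ IsUnit ((p : ℕ) : 𝓞 L) := by
      rw [NumberField.isUnit_iff_norm, RingOfIntegers.coe_norm]
      have : (((p : ℕ) : 𝓞 L) : L) = algebraMap ℚ L (p : ℕ) := by simp
      rw [this, Algebra.norm_algebraMap, abs_pow, Nat.abs_cast]
      exact (one_lt_pow₀ (by exact_mod_cast p.2.one_lt) Module.finrank_pos.ne').ne'
    obtain ⟨m, hm, hpm⟩ := exists_max_ideal_of_mem_nonunits hnu
    refine ⟨⟨m, hm.isPrime, ?_⟩, hpm⟩
    rintro rfl
    exact p.2.ne_zero (by exact_mod_cast (Ideal.mem_bot.1 hpm))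
  choose v hv using h
  refine Infinite.of_injective v fun p q hpq => ?_
  by_contra hne
  have hco : Nat.Coprime p q :=
    (Nat.coprime_primes p.2 q.2).2 fun h => hne (Subtype.ext h)
  obtain ⟨a, b, hab⟩ := (Nat.isCoprime_iff_coprime.2 hco).map (Int.castRingHom (𝓞 L))
  refine (v p).isPrime.ne_top ((Ideal.eq_top_iff_one _).2 ?_)
  rw [← hab]
  refine Ideal.add_mem _ (Ideal.mul_mem_left _ _ (by simpa using hv p))
    (Ideal.mul_mem_left _ _ ?_)
  rw [hpq]; simpa using hv q

variable (L) in
/-- A finite set of vectors is supported on finitely many primes, but every prime is in the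
support of some vector of valuations, namely that of a uniformizer. -/
lemma not_finite_range_valVec : ¬ Module.Finite ℤ (LinearMap.range (valVec L)) := by
  classical
  intro hfin
  obtain ⟨S, hS⟩ := Module.Finite.iff_fg.1 hfin
  have := infinite_heightOneSpectrum L
  obtain ⟨v, hv⟩ := Infinite.exists_notMem_finset (S.biUnion Finsupp.support)
  have hle : LinearMap.range (valVec L) ≤ LinearMap.ker (Finsupp.lapply v) := by
    rw [← hS, Submodule.span_le]
    intro y hy
    by_contra h
    exact hv (Finset.mem_biUnion.2 ⟨y, hy, Finsupp.mem_support_iff.2 h⟩)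
  obtain ⟨π, hπ⟩ := v.valuation_exists_uniformizer L
  have hπ0 : π ≠ 0 := by
    rintro rfl
    rw [map_zero] at hπ
    exact WithZero.exp_ne_zero hπ.symm
  have h1 := (valVec_apply_eq_zero (Additive.ofMul (Units.mk0 π hπ0)) v).1
    (hle (LinearMap.mem_range_self _ _))
  rw [toMul_ofMul, Units.val_mk0, hπ] at h1
  simp at h1

end

/-! ### Structure of the multiplicative group -/

/-- Let L be a number field. Then `Lˣ` is isomorphic, as an abstract group, to the direct
product of its torsion subgroup (the finite group of roots of unity in L) and a free
abelian group of countably infinite rank. -/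
theorem stmt17 (L : Type*) [Field L] [NumberField L] :
    Finite (CommGroup.torsion Lˣ) ∧
    Nonempty (Lˣ ≃* (CommGroup.torsion Lˣ) × Multiplicative (ℕ →₀ ℤ)) := by
  refine ⟨finite_torsion_units, ?_⟩
  have := free_submodule_finsupp (LinearMap.range (valVec L))
  obtain ⟨f, hf, hker⟩ := exists_surjective_ker_torsion (valVec L)
  obtain ⟨e⟩ := nonempty_mulEquiv_torsion_prod f hf fun x => by
    rw [hker, CommGroup.mem_torsion, isOfFinAddOrder_ofMul_iff]
  let F := (LinearMap.ker (valVec L) ⧸ Submodule.torsion ℤ (LinearMap.ker (valVec L))) ×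
    LinearMap.range (valVec L)
  let b := Module.Free.chooseBasis ℤ F
  have : Countable L := (Set.countable_univ_iff (α := L)).1
    ((Algebraic.countable ℚ L).mono fun x _ => Algebra.IsAlgebraic.isAlgebraic x)
  have : Countable Lˣ := Units.val_injective.countable
  have : Countable (Additive Lˣ) := ‹Countable Lˣ›
  have : Countable F := hf.countable
  have : Countable (Module.Free.ChooseBasisIndex ℤ F) := b.injective.countable
  have : Infinite (Module.Free.ChooseBasisIndex ℤ F) := by
    by_contra h
    rw [not_infinite_iff_finite] at h
    have : Module.Finite ℤ F := Module.Finite.of_basis b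
    exact not_finite_range_valVec L
      (Module.Finite.of_surjective (LinearMap.snd ℤ _ _ : F →ₗ[ℤ] _) LinearMap.snd_surjective)
  obtain ⟨i⟩ := nonempty_equiv_of_countable (α := Module.Free.ChooseBasisIndex ℤ F) (β := ℕ)
  exact ⟨e.trans ((MulEquiv.refl _).prodCongr
    (AddEquiv.toMultiplicative (b.reindex i).repr.toAddEquiv))⟩
end

section
/- Let L/K be a Galois extension of number fields whose Galois group is cyclic and whose degree [L:K] is at least 2. Then the quotient group Lˣ/Kˣ (the multiplicative group of L modulo the image of the multiplicative group of K) is isomorphic, as an abstract group, to the direct product of its torsion subgroup, which is finite, and a free abelian group of countably infinite rank (i.e. ⊕_{n ∈ ℕ} ℤ). -/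
/-!
Let `σ` generate the Galois group. The homomorphism `x ↦ σ x / x` of `Lˣ` has kernel `Kˣ`
(`ker_quotHom`), so it embeds `Q = Lˣ/Kˣ` in `Lˣ`.

Structure: taking divisors maps `Lˣ` to a free abelian group with kernel `(𝓞 L)ˣ`, which is finitely
generated by Dirichlet's unit theorem. Restricted to `Q`, this map has finitely generated kernel,
and its image is free, being a subgroup of a free abelian group (`free_of_submodule_finsupp`). Hence
`Q` is a finite group times a free group (`structure_of_finite_ker`), whose rank is at most countable
because `Q` is countable.

Infinite rank: it remains to see that `Q` is not finitely generated (`not_fg_range_quotHom`).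
Otherwise, some nonzero integer `D` satisfies `σ x / x ∈ 𝓞 L[1/D]` for all `x ∈ Lˣ`. Choose
`θ ∈ 𝓞 L` with `σ θ ≠ θ` and a nonzero integer `N` divisible by `σ θ - θ`. For `t ∈ ℤ`, the
element `x = 1 - tDNθ` divides `D ^ k * σ x` for some `k`, hence also
`D ^ k * (σ x - x) = - D ^ k * t * D * N * (σ θ - θ)`. As `x` is coprime to `t`, `D` and `N`, it is a
unit. But `1 - tγ` with `γ ≠ 0` cannot be a unit for every integer `t`, since the absolute value of
its norm exceeds `1` for large `t`
(`exists_not_isUnit`).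
-/

open NumberField

/-! ### Subgroups of free abelian groups and splitting off torsion -/

/-- A subgroup of a free abelian group of arbitrary rank is free. Well-order the index set; for each
`n`, choose in `N` an element `b n` supported on `Iic n` whose `n`-th coordinate generates the ideal
of all `n`-th coordinates of such elements. The `b n` with nonzero `n`-th coordinate form a
(triangular) basis of `N`. -/
theorem free_of_submodule_finsupp {ι : Type*} (N : Submodule ℤ (ι →₀ ℤ)) : Module.Free ℤ N := by
  classical
  obtain ⟨_, _⟩ := exists_wellFoundedLT ι
  let I : ι → Ideal ℤ := fun n =>
    (N ⊓ Finsupp.supported ℤ ℤ (Set.Iic n)).map (Finsupp.lapply n)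
  have hgen : ∀ n, ∃ b ∈ N ⊓ Finsupp.supported ℤ ℤ (Set.Iic n),
      b n = Submodule.IsPrincipal.generator (I n) := fun n =>
    Submodule.IsPrincipal.generator_mem (I n)
  choose b hbN hbn using hgen
  have hsupp : ∀ n i, n < i → b n i = 0 := fun n i hni => by
    by_contra h
    exact absurd ((Finsupp.mem_supported ℤ _).1 (hbN n).2 (Finsupp.mem_support_iff.2 h))
      (not_le.2 hni)
  let J := {n : ι // b n n ≠ 0}
  let v : J → N := fun n => ⟨b n, (hbN n).1⟩
  -- well-founded induction on a bound for the support, clearing the top coordinate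
  have hspan : ∀ n, ∀ x : N, (∀ i, n < i → x.1 i = 0) →
      x ∈ Submodule.span ℤ (Set.range v) := by
    intro n
    induction n using WellFoundedLT.induction with
    | ind n ih =>
      intro x hx
      have hxI : x.1 n ∈ I n := by
        refine ⟨x.1, ⟨x.2, (Finsupp.mem_supported ℤ _).2 fun i hi => ?_⟩, rfl⟩
        by_contra h
        exact Finsupp.mem_support_iff.1 hi (hx i (not_le.1 h))
      obtain ⟨c, hc⟩ := (Submodule.IsPrincipal.mem_iff_eq_smul_generator _).1 hxI
      rw [← hbn] at hc
      let y : N := x - c • ⟨b n, (hbN n).1⟩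
      have hy : ∀ i, n ≤ i → y.1 i = 0 := by
        intro i hi
        rcases hi.eq_or_lt with rfl | hi
        · simp [y, hc]
        · simp [y, hx i hi, hsupp n i hi]
      -- if `b n` is not one of the basis vectors, the top coordinate of `x` already vanishes
      have hb : (⟨b n, (hbN n).1⟩ : N) ∈ Submodule.span ℤ (Set.range v) ∨ c • b n n = 0 := by
        by_cases h : b n n = 0
        · right; simp [h]
        · exact Or.inl (Submodule.subset_span ⟨⟨n, h⟩, rfl⟩)
      have key : ∀ z : N, (∀ i, n ≤ i → z.1 i = 0) → z ∈ Submodule.span ℤ (Set.range v) := by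
        intro z hz
        by_cases h0 : z.1.support.Nonempty
        · refine ih (z.1.support.max' h0) ?_ z fun i hi => ?_
          · by_contra h
            exact Finsupp.mem_support_iff.1 (z.1.support.max'_mem h0) (hz _ (not_lt.1 h))
          · by_contra h
            exact absurd (z.1.support.le_max' i (Finsupp.mem_support_iff.2 h)) (not_le.2 hi)
        · have : z = 0 := by
            apply Subtype.ext
            simpa [Finset.not_nonempty_iff_eq_empty] using h0
          rw [this]; exact Submodule.zero_mem _
      rcases hb with hb | hb
      · have : x = y + c • ⟨b n, (hbN n).1⟩ := by simp [y]
        rw [this]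
        exact Submodule.add_mem _ (key y hy) (Submodule.smul_mem _ _ hb)
      · refine key x fun i hi => ?_
        rcases hi.eq_or_lt with rfl | hi
        · rw [hc, hb]
        · exact hx i hi
  have hli : LinearIndependent ℤ v := by
    rw [linearIndependent_iff]
    -- in a nontrivial relation, only the largest index contributes to its own coordinate
    intro l hl
    by_contra hne
    have h0 : l.support.Nonempty := Finsupp.support_nonempty_iff.2 hne
    set m := l.support.max' h0
    have h1 : (Finsupp.linearCombination ℤ v l : N).1 m.1 = 0 := by rw [hl]; rfl
    rw [Finsupp.linearCombination_apply, Finsupp.sum, Submodule.coe_sum, Finsupp.finsetSum_apply,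
      Finset.sum_eq_single m] at h1
    · have h2 : l m * b m.1 m.1 = 0 := h1
      exact (mul_ne_zero (Finsupp.mem_support_iff.1 (l.support.max'_mem h0)) m.2) h2
    · intro j hj hjm
      have : j < m := lt_of_le_of_ne (l.support.le_max' j hj) hjm
      change l j * b j.1 m.1 = 0
      rw [hsupp j.1 m.1 this, mul_zero]
    · intro h
      exact absurd (l.support.max'_mem h0) h
  refine Module.Free.of_basis (Module.Basis.mk hli fun x _ => ?_)
  by_cases h0 : x.1.support.Nonempty
  · refine hspan (x.1.support.max' h0) x fun i hi => ?_
    by_contra h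
    exact absurd (x.1.support.le_max' i (Finsupp.mem_support_iff.2 h)) (not_le.2 hi)
  · have : x = 0 := by
      apply Subtype.ext
      simpa [Finset.not_nonempty_iff_eq_empty] using h0
    rw [this]; exact Submodule.zero_mem _

/-- The torsion subgroup of (finite) × (free) is the finite factor. -/
theorem torsion_splits_of_equiv {Q B : Type*} [CommGroup Q] [AddCommGroup B] [Finite B]
    (e : Q ≃* Multiplicative B × Multiplicative (ℕ →₀ ℤ)) :
    Finite (CommGroup.torsion Q) ∧
      Nonempty (Q ≃* CommGroup.torsion Q × Multiplicative (ℕ →₀ ℤ)) := by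
  have h1 : ∀ x : Q, x ∈ CommGroup.torsion Q ↔ (e x).2 = 1 := by
    intro x
    rw [CommGroup.mem_torsion,
      ← Function.Injective.isOfFinOrder_iff (f := e.toMonoidHom) e.injective,
      IsOfFinOrder.prod_iff]
    constructor
    · rintro ⟨-, h⟩
      exact (isOfFinOrder_iff_eq_one _).1 h
    · intro h
      exact ⟨isOfFinOrder_of_finite _, h ▸ IsOfFinOrder.one⟩
  let t : CommGroup.torsion Q ≃* Multiplicative B :=
    { toFun := fun x => (e x).1
      invFun := fun y => ⟨e.symm (y, 1), by rw [h1]; simp⟩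
      left_inv := fun x => by
        apply Subtype.ext
        rw [MulEquiv.symm_apply_eq]
        exact Prod.ext rfl ((h1 _).1 x.2).symm
      right_inv := fun y => by simp
      map_mul' := fun x y => by simp }
  exact ⟨Finite.of_equiv _ t.symm.toEquiv, ⟨e.trans (t.symm.prodCongr (MulEquiv.refl _))⟩⟩

/-- A countable abelian group `Q` that is not finitely generated, but has a homomorphism to a free
abelian group with finitely generated kernel, is the product of a finite torsion group and a free
group of countably infinite rank: the image is free, so `Q` splits as kernel times image, and the
structure theorem applies to the kernel. -/
theorem structure_of_finite_ker {Q ι : Type*} [CommGroup Q] [Countable Q] (hQ : ¬ Group.FG Q)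
    (f : Additive Q →ₗ[ℤ] (ι →₀ ℤ)) (hf : Module.Finite ℤ (LinearMap.ker f)) :
    Finite (CommGroup.torsion Q) ∧
      Nonempty (Q ≃* CommGroup.torsion Q × Multiplicative (ℕ →₀ ℤ)) := by
  have := free_of_submodule_finsupp (LinearMap.range f)
  obtain ⟨g, hg⟩ := f.rangeRestrict.exists_rightInverse_of_surjective f.range_rangeRestrict
  have hex : Function.Exact (LinearMap.ker f).subtype f.rangeRestrict := by
    rw [LinearMap.exact_iff]
    simp
  let e₁ := (hex.splitSurjectiveEquiv (Submodule.subtype_injective _) ⟨g, hg⟩).1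
  have : AddGroup.FG (LinearMap.ker f) := Module.Finite.iff_addGroup_fg.1 hf
  obtain ⟨n, κ, _, p, hp, k, ⟨e₂⟩⟩ :=
    AddCommGroup.equiv_free_prod_directSum_zmod (LinearMap.ker f)
  have : ∀ i, NeZero (p i ^ k i) := fun i => ⟨pow_ne_zero _ (hp i).ne_zero⟩
  let B := DirectSum κ fun i => ZMod (p i ^ k i)
  have : Finite B := by
    classical
    exact Finite.of_equiv _ (DirectSum.addEquivProd (fun i => ZMod (p i ^ k i))).symm.toEquiv
  let F := (Fin n →₀ ℤ) × LinearMap.range f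
  let e₃ : Additive Q ≃+ B × F :=
    e₁.toAddEquiv.trans <| (e₂.prodCongr (AddEquiv.refl _)).trans <|
      (AddEquiv.prodComm.prodCongr (AddEquiv.refl _)).trans AddEquiv.prodAssoc
  let bF := Module.Free.chooseBasis ℤ F
  have hF : ¬ Module.Finite ℤ F := by
    intro h
    apply hQ
    have : Module.Finite ℤ (B × F) := inferInstance
    have : Module.Finite ℤ (Additive Q) := Module.Finite.equiv e₃.toIntLinearEquiv.symm
    rw [GroupFG.iff_add_fg]
    exact Module.Finite.iff_addGroup_fg.1 this
  have hinf : Infinite (Module.Free.ChooseBasisIndex ℤ F) := by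
    rw [← not_finite_iff_infinite]
    intro h
    exact hF (Module.Finite.of_basis bF)
  have hcF : Countable F := by
    have : Countable (Additive Q) := ‹Countable Q›
    exact (show Function.Surjective (fun x => (e₃ x).2) from
      Prod.snd_surjective.comp e₃.surjective).countable
  have hcount : Countable (Module.Free.ChooseBasisIndex ℤ F) := bF.injective.countable
  obtain ⟨d⟩ := nonempty_equiv_of_countable (α := Module.Free.ChooseBasisIndex ℤ F) (β := ℕ)
  let e₄ : F ≃+ (ℕ →₀ ℤ) := (bF.reindex d).repr.toAddEquiv
  let e₅ : Additive Q ≃+ B × (ℕ →₀ ℤ) := e₃.trans ((AddEquiv.refl _).prodCongr e₄)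
  let e₆ : Q ≃* Multiplicative B × Multiplicative (ℕ →₀ ℤ) :=
    { toFun := fun x => (Multiplicative.ofAdd (e₅ (Additive.ofMul x)).1,
        Multiplicative.ofAdd (e₅ (Additive.ofMul x)).2)
      invFun := fun y => (e₅.symm (y.1.toAdd, y.2.toAdd)).toMul
      left_inv := fun x => by simp
      right_inv := fun y => by simp
      map_mul' := fun x y => by simp }
  exact torsion_splits_of_equiv e₆

/-! ### The divisor map on `Lˣ` -/

open IsDedekindDomain in
/-- The divisor of `x : Lˣ`, as the finitely supported function on the primes `v` of `𝓞 L` given by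
`v.valuationOfNeZero x`. With Mathlib's multiplicative convention this is minus the usual
exponent of `v` in `x`. -/
noncomputable def divisorHom (L : Type*) [Field L] [NumberField L] :
    Additive Lˣ →+ (HeightOneSpectrum (𝓞 L) →₀ ℤ) where
  toFun x := Finsupp.ofSupportFinite
    (fun v => (v.valuationOfNeZero (K := L) x.toMul).toAdd) <| by
      refine ((HeightOneSpectrum.Support.finite (𝓞 L) (x.toMul : L)).union
        (HeightOneSpectrum.Support.finite (𝓞 L) ((x.toMul⁻¹ : Lˣ) : L))).subset fun v hv => ?_
      have hv : (v.valuationOfNeZero (K := L) x.toMul) ≠ 1 := hv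
      rcases lt_or_gt_of_ne hv with h | h
      · right
        have h' : 1 < v.valuationOfNeZero (K := L) x.toMul⁻¹ := by
          rw [map_inv]; exact one_lt_inv_of_inv (by simpa using h)
        change 1 < v.valuation L _
        rw [← HeightOneSpectrum.valuationOfNeZero_eq]
        exact_mod_cast h'
      · left
        change 1 < v.valuation L _
        rw [← HeightOneSpectrum.valuationOfNeZero_eq]
        exact_mod_cast h
  map_zero' := by ext v; simp [Finsupp.ofSupportFinite]
  map_add' x y := by
    ext v
    simp only [Finsupp.ofSupportFinite, Finsupp.add_apply, Finsupp.coe_mk, toMul_add, map_mul,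
      toAdd_mul]
    rfl

open IsDedekindDomain in
/-- An element with trivial divisor is a unit of the ring of integers. -/
theorem ker_divisorHom_le (L : Type*) [Field L] [NumberField L] (x : Lˣ)
    (hx : divisorHom L (Additive.ofMul x) = 0) :
    ∃ u : (𝓞 L)ˣ, Units.map (algebraMap (𝓞 L) L).toMonoidHom u = x := by
  have h : ∀ v : HeightOneSpectrum (𝓞 L), v.valuation L (x : L) = 1 := by
    intro v
    have h1 : v.valuationOfNeZero (K := L) x = 1 := DFunLike.congr_fun hx v
    rw [← HeightOneSpectrum.valuationOfNeZero_eq, h1]; rfl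
  obtain ⟨a, ha⟩ := HeightOneSpectrum.mem_integers_of_valuation_le_one (R := 𝓞 L) L (x : L)
    fun v => (h v).le
  obtain ⟨b, hb⟩ := HeightOneSpectrum.mem_integers_of_valuation_le_one (R := 𝓞 L) L ((x : L)⁻¹)
    fun v => by rw [map_inv₀, h v, inv_one]
  have hab : a * b = 1 := by
    apply FaithfulSMul.algebraMap_injective (𝓞 L) L
    rw [map_mul, ha, hb, map_one, mul_inv_cancel₀ x.ne_zero]
  exact ⟨⟨a, b, hab, by rw [mul_comm, hab]⟩, Units.ext ha⟩

theorem finite_ker_divisorHom (L : Type*) [Field L] [NumberField L] :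
    Module.Finite ℤ (LinearMap.ker (divisorHom L).toIntLinearMap) := by
  let j : Additive (𝓞 L)ˣ →ₗ[ℤ] Additive Lˣ :=
    (MonoidHom.toAdditive (Units.map (algebraMap (𝓞 L) L).toMonoidHom)).toIntLinearMap
  have : LinearMap.ker (divisorHom L).toIntLinearMap ≤ LinearMap.range j := by
    intro x hx
    obtain ⟨u, hu⟩ := ker_divisorHom_le L x.toMul hx
    exact ⟨Additive.ofMul u, congrArg Additive.ofMul hu⟩
  exact Module.Finite.of_injective _ (Submodule.inclusion_injective this)

/-- `Lˣ` maps to a free abelian group by taking divisors, with kernel the finitely generated group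
`(𝓞 L)ˣ`; a subgroup of `Lˣ` inherits such a map. -/
theorem structure_of_injective {L Q : Type*} [Field L] [NumberField L] [CommGroup Q]
    (i : Q →* Lˣ) (hi : Function.Injective i) (hQ : ¬ Group.FG Q) :
    Finite (CommGroup.torsion Q) ∧
      Nonempty (Q ≃* CommGroup.torsion Q × Multiplicative (ℕ →₀ ℤ)) := by
  have : Countable L := by
    rw [← Cardinal.mk_le_aleph0_iff]
    simpa using Algebra.IsAlgebraic.lift_cardinalMk_le_max ℚ L
  have : Countable Lˣ := Units.val_injective.countable
  have : Countable Q := hi.countable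
  let j : Additive Q →ₗ[ℤ] Additive Lˣ := (MonoidHom.toAdditive i).toIntLinearMap
  refine structure_of_finite_ker hQ ((divisorHom L).toIntLinearMap ∘ₗ j) ?_
  have := finite_ker_divisorHom L
  refine Module.Finite.of_injective (j.restrict
    (p := LinearMap.ker ((divisorHom L).toIntLinearMap ∘ₗ j))
    (q := LinearMap.ker (divisorHom L).toIntLinearMap) fun x hx => hx) fun x y hxy => ?_
  exact Subtype.ext (hi (congrArg Subtype.val hxy))

/-! ### The map `x ↦ σ x / x` and infinite generation of `Lˣ/Kˣ` -/

/-- The homomorphism `x ↦ σ x / x` of `Lˣ`. -/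
noncomputable def quotHom {K L : Type*} [Field K] [Field L] [Algebra K L] (σ : L ≃ₐ[K] L) :
    Lˣ →* Lˣ :=
  Units.map (σ : L →* L) / MonoidHom.id _

theorem coe_quotHom {K L : Type*} [Field K] [Field L] [Algebra K L] (σ : L ≃ₐ[K] L) (x : Lˣ) :
    (quotHom σ x : L) = σ x / x := by
  simp [quotHom]

/-- When `σ` generates the Galois group, its fixed field is `K`, so `x ↦ σ x / x` has kernel `Kˣ`. -/
theorem ker_quotHom {K L : Type*} [Field K] [Field L] [Algebra K L] [FiniteDimensional K L]
    [IsGalois K L] {σ : L ≃ₐ[K] L} (hσ : ∀ τ, τ ∈ Subgroup.zpowers σ) :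
    (quotHom σ).ker = (Units.map (algebraMap K L).toMonoidHom).range := by
  ext x
  rw [MonoidHom.mem_ker, Units.ext_iff, coe_quotHom, Units.val_one, div_eq_one_iff_eq x.ne_zero]
  constructor
  · intro h
    have hfix : ∀ τ : L ≃ₐ[K] L, τ (x : L) = x := by
      intro τ
      have h1 : Subgroup.zpowers σ ≤ MulAction.stabilizer (L ≃ₐ[K] L) (x : L) := by
        rw [Subgroup.zpowers_le]; exact h
      exact h1 (hσ τ)
    obtain ⟨a, ha⟩ := (IsGalois.mem_range_algebraMap_iff_fixed (x : L)).2 hfix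
    have ha0 : a ≠ 0 := by
      rintro rfl
      exact x.ne_zero (by simpa using ha.symm)
    exact ⟨Units.mk0 a ha0, Units.ext ha⟩
  · rintro ⟨a, rfl⟩
    exact σ.commutes a

/-- For `γ ≠ 0`, not all `1 - tγ` with `t : ℤ` are units: when `t` is large, every complex embedding
of `1 - tγ` has absolute value greater than `1`, hence so does the norm. -/
theorem exists_not_isUnit (L : Type*) [Field L] [NumberField L] (γ : 𝓞 L) (hγ : γ ≠ 0) :
    ∃ t : ℤ, ¬ IsUnit (1 - (t : 𝓞 L) * γ) := by
  have h1 : ∃ t : ℕ, ∀ φ : L →ₐ[ℚ] ℂ, 2 < t * ‖φ γ‖ := by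
    have : ∀ φ : L →ₐ[ℚ] ℂ, ∀ᶠ t : ℕ in Filter.atTop, 2 < t * ‖φ γ‖ := by
      intro φ
      have hpos : 0 < ‖φ γ‖ := by
        rw [norm_pos_iff, map_ne_zero]
        simpa using hγ
      exact (tendsto_natCast_atTop_atTop.atTop_mul_const hpos).eventually_gt_atTop 2
    exact (Filter.eventually_all.2 this).exists
  obtain ⟨t, ht⟩ := h1
  refine ⟨t, fun hu => ?_⟩
  have h2 := NumberField.isUnit_iff_norm.1 hu
  rw [RingOfIntegers.coe_norm] at h2
  have h3 := congrArg norm (Algebra.norm_eq_prod_embeddings ℚ ℂ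
    (((1 - ((t : ℤ) : 𝓞 L) * γ : 𝓞 L)) : L))
  rw [norm_prod] at h3
  have h4 : ‖algebraMap ℚ ℂ (Algebra.norm ℚ (((1 - ((t : ℤ) : 𝓞 L) * γ : 𝓞 L)) : L))‖ = 1 := by
    rw [eq_ratCast, Complex.norm_ratCast]
    exact_mod_cast h2
  rw [h4] at h3
  have h5 : ∀ φ : L →ₐ[ℚ] ℂ, 1 < ‖φ (((1 - ((t : ℤ) : 𝓞 L) * γ : 𝓞 L)) : L)‖ := by
    intro φ
    have := norm_sub_norm_le ((t : ℂ) * φ γ) 1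
    rw [norm_mul, Complex.norm_natCast, norm_one, norm_sub_rev] at this
    have h6 := ht φ
    simp only [Int.cast_natCast, map_sub, map_one, map_mul, map_natCast]
    linarith
  have : Nonempty (L →ₐ[ℚ] ℂ) := ⟨IsAlgClosed.lift⟩
  have h7 := Finset.prod_lt_prod_of_nonempty (s := (Finset.univ : Finset (L →ₐ[ℚ] ℂ)))
    (f := fun _ => (1 : ℝ)) (fun _ _ => one_pos) (fun φ _ => h5 φ) Finset.univ_nonempty
  rw [Finset.prod_const_one, ← h3] at h7
  exact lt_irrefl _ h7

/-- `x = 1 - tDNθ` is coprime to `t`, `D` and `N`; if it divides `D ^ k` times its conjugate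
`1 - tDNθ'`, it divides `D ^ k` times the difference, hence `D ^ k * (t * D * N * N)`, so it is a
unit. -/
theorem isUnit_of_dvd_pow_mul {R : Type*} [CommRing R] {D N t θ θ' : R} (hN : θ' - θ ∣ N) {k : ℕ}
    (h : 1 - t * (D * N * θ) ∣ D ^ k * (1 - t * (D * N * θ'))) :
    IsUnit (1 - t * (D * N * θ)) := by
  set x := 1 - t * (D * N * θ) with hx
  have h1 : x ∣ D ^ k * (t * D * N * N) := by
    have h2 : x ∣ D ^ k * (1 - t * (D * N * θ')) - D ^ k * x := dvd_sub h (Dvd.intro_left _ rfl)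
    have h3 : D ^ k * (1 - t * (D * N * θ')) - D ^ k * x =
        -(D ^ k * (t * D * N * (θ' - θ))) := by rw [hx]; ring
    rw [h3, dvd_neg] at h2
    exact h2.trans (mul_dvd_mul_left _ (mul_dvd_mul_left _ hN))
  have ht : IsCoprime x t := ⟨1, D * N * θ, by rw [hx]; ring⟩
  have hD : IsCoprime x D := ⟨1, t * N * θ, by rw [hx]; ring⟩
  have hN' : IsCoprime x N := ⟨1, t * D * θ, by rw [hx]; ring⟩
  exact ((hD.pow_right.mul_right (((ht.mul_right hD).mul_right hN').mul_right hN'))).isUnit_of_dvd'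
    dvd_rfl h1

/-- A finitely generated subgroup of `Lˣ` lies in `𝓞 L[1/D]` for some nonzero integer `D`. -/
theorem exists_denominator {L : Type*} [Field L] [NumberField L] {H : Subgroup Lˣ} (hH : H.FG) :
    ∃ D : ℤ, D ≠ 0 ∧ ∀ h ∈ H, ∃ k : ℕ, IsIntegral ℤ ((D : L) ^ k * (h : L)) := by
  classical
  obtain ⟨S, rfl⟩ := hH
  obtain ⟨D, hD, hS⟩ := exists_integral_multiples ℤ ℚ
    (S.image (fun s : Lˣ => (s : L)) ∪ S.image (fun s : Lˣ => ((s⁻¹ : Lˣ) : L)))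
  refine ⟨D, hD, fun h hh => ?_⟩
  induction hh using Subgroup.closure_induction'' with
  | mem x hx =>
    refine ⟨1, ?_⟩
    rw [pow_one, ← zsmul_eq_mul]
    exact hS _ (Finset.mem_union_left _ (Finset.mem_image_of_mem _ hx))
  | inv_mem x hx =>
    refine ⟨1, ?_⟩
    rw [pow_one, ← zsmul_eq_mul]
    exact hS _ (Finset.mem_union_right _
      (Finset.mem_image_of_mem (fun s : Lˣ => ((s⁻¹ : Lˣ) : L)) hx))
  | one => exact ⟨0, by simpa using isIntegral_one⟩
  | mul x y _ _ hx hy =>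
    obtain ⟨k, hk⟩ := hx
    obtain ⟨l, hl⟩ := hy
    refine ⟨k + l, ?_⟩
    have := hk.mul hl
    rwa [mul_mul_mul_comm, ← pow_add, ← Units.val_mul] at this

/-- If all `σ x / x` were in `𝓞 L[1/D]`, then, for `θ` an integer moved by `σ` and `N` a nonzero
integer divisible by `σ θ - θ`, every `1 - tDNθ` with `t : ℤ` would be a unit. -/
theorem not_fg_range_quotHom {K L : Type*} [Field K] [Field L] [NumberField L] [Algebra K L]
    {σ : L ≃ₐ[K] L} (hσ : σ ≠ 1) : ¬ (quotHom σ).range.FG := by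
  intro hFG
  obtain ⟨D, hD, hint⟩ := exists_denominator hFG
  have hθ : ∃ θ : 𝓞 L, σ θ ≠ θ := by
    by_contra! hall
    apply hσ
    ext x
    obtain ⟨d, hd, hx⟩ := exists_integral_multiples ℤ ℚ {x}
    have := hall ⟨d • x, hx x (by simp)⟩
    simpa [hd] using this
  obtain ⟨θ, hθ⟩ := hθ
  obtain ⟨θ', hθ'⟩ : ∃ θ' : 𝓞 L, (θ' : L) = σ θ :=
    ⟨⟨σ θ, (RingOfIntegers.isIntegral_coe θ).map (σ.restrictScalars ℤ)⟩, rfl⟩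
  have hδ : (θ' : L) - θ ≠ 0 := by rw [hθ']; exact sub_ne_zero.2 hθ
  obtain ⟨N, hN, hNδ⟩ : ∃ N : ℤ, N ≠ 0 ∧ θ' - θ ∣ (N : 𝓞 L) := by
    obtain ⟨N, hN, h⟩ := exists_integral_multiples ℤ ℚ {((θ' : L) - θ)⁻¹}
    obtain ⟨c, hc⟩ : ∃ c : 𝓞 L, (c : L) = N * ((θ' : L) - θ)⁻¹ :=
      ⟨⟨_, h _ (Finset.mem_singleton_self _)⟩, zsmul_eq_mul _ _⟩
    refine ⟨N, hN, c, FaithfulSMul.algebraMap_injective (𝓞 L) L ?_⟩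
    rw [map_mul, map_sub, map_intCast]
    change (N : L) = ((θ' : L) - θ) * (c : L)
    rw [hc]
    field_simp
  have hγ : (D : 𝓞 L) * N * θ ≠ 0 := by
    have : θ ≠ 0 := by
      rintro rfl
      simp at hθ
    simp [hD, hN, this]
  obtain ⟨t, ht⟩ := exists_not_isUnit L _ hγ
  apply ht
  set x : 𝓞 L := 1 - t * (D * N * θ) with hx
  have hx0 : (x : L) ≠ 0 := by
    intro h0
    have h1 : σ (x : L) - x = 0 := by rw [h0]; simp
    have h2 : σ (x : L) - x = - (t * (D * N * ((θ' : L) - θ))) := by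
      simp only [hx, map_sub, map_mul, map_one, map_intCast, hθ']; ring
    rw [h2] at h1
    have ht0 : t = 0 := by simpa [hD, hN, hδ] using h1
    apply ht
    simp [hx, ht0]
  obtain ⟨k, hk⟩ := hint _ ⟨Units.mk0 (x : L) hx0, rfl⟩
  rw [coe_quotHom, Units.val_mk0] at hk
  obtain ⟨a, ha⟩ : ∃ a : 𝓞 L, (a : L) = D ^ k * (σ (x : L) / x) := ⟨⟨_, hk⟩, rfl⟩
  refine isUnit_of_dvd_pow_mul (θ' := θ') hNδ (k := k)
    ⟨a, FaithfulSMul.algebraMap_injective (𝓞 L) L ?_⟩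
  have h3 : (((1 - t * (D * N * θ') : 𝓞 L)) : L) = σ (x : L) := by
    simp only [hx, map_sub, map_mul, map_one, map_intCast, hθ']
  rw [← hx, map_mul, map_mul, map_pow, map_intCast]
  change _ * (((1 - t * (D * N * θ') : 𝓞 L)) : L) = (x : L) * (a : L)
  rw [h3, ha]
  field_simp

/-- Let L/K be a Galois extension of number fields with cyclic Galois group and degree
[L:K] ≥ 2. Then `Lˣ/Kˣ` is isomorphic, as an abstract group, to the direct product of its
torsion subgroup, which is finite, and a free abelian group of countably infinite rank. -/
theorem stmt18 (K L : Type*) [Field K] [NumberField K] [Field L] [NumberField L]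
    [Algebra K L] [IsGalois K L] [IsCyclic (L ≃ₐ[K] L)]
    (hdeg : 2 ≤ Module.finrank K L) :
    Finite (CommGroup.torsion (Lˣ ⧸ (Units.map (algebraMap K L).toMonoidHom).range)) ∧
    Nonempty ((Lˣ ⧸ (Units.map (algebraMap K L).toMonoidHom).range) ≃*
      (CommGroup.torsion (Lˣ ⧸ (Units.map (algebraMap K L).toMonoidHom).range)) ×
        Multiplicative (ℕ →₀ ℤ)) := by
  obtain ⟨σ, hσ⟩ := IsCyclic.exists_generator (α := L ≃ₐ[K] L)
  have hσ1 : σ ≠ 1 := by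
    rintro rfl
    have h1 := IsGalois.card_aut_eq_finrank K L
    have : Subsingleton (L ≃ₐ[K] L) := ⟨fun a b => by
      have ha := hσ a
      have hb := hσ b
      simp only [Subgroup.zpowers_one_eq_bot, Subgroup.mem_bot] at ha hb
      rw [ha, hb]⟩
    rw [Nat.card_of_subsingleton 1] at h1
    omega
  rw [← ker_quotHom hσ]
  refine structure_of_injective (QuotientGroup.kerLift (quotHom σ))
    (QuotientGroup.kerLift_injective (quotHom σ)) fun hFG => not_fg_range_quotHom hσ1 ?_
  rw [← Group.fg_iff_subgroup_fg]
  exact Group.fg_of_surjective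
    (f := (QuotientGroup.quotientKerEquivRange (quotHom σ)).toMonoidHom)
    (QuotientGroup.quotientKerEquivRange (quotHom σ)).surjective
end
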